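/- arXiv:1911.10634 — 4 statements merged into one kernel-verified Lean document; each statement's English description precedes it below -/
import Mathlib

section
/- Let p be a prime number with p ≡ 3 (mod 4) and p ≠ 3. Then the sum of Legendre symbols Σ_{n=1}^{(p−1)/2} (n/p) equals (2 − (2/p)) · h(−p), where h(−p) is the class number of the imaginary quadratic field ℚ(√−p). -/
set_option linter.unusedSectionVars false
set_option linter.unusedVariables false

namespace CNF

section count
open Ideal
variable (R : Type*) [CommRing R] [IsDedekindDomain R] [Module.Free ℤ R] [Module.Finite ℤ R]
  [CharZero R]

noncomputable def cnt (n : ℕ) : ℕ := Nat.card {I : Ideal R // absNorm I = n}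

variable {R}

lemma mem_of_absNorm {I : Ideal R} {n : ℕ} (h : absNorm I = n) : (n : R) ∈ I :=
  h ▸ absNorm_mem I

lemma norm_span_nat (n : ℕ) : absNorm (span {(n : R)}) = n ^ Module.finrank ℤ R := by
  rw [absNorm_span_singleton, show (n : R) = algebraMap ℤ R n by simp, Algebra.norm_algebraMap]
  simp [Int.natAbs_pow]

lemma sup_span_eq {m n : ℕ} (hmn : m.Coprime n) {A B : Ideal R} (hA : absNorm A = m)
    (hB : absNorm B = n) : A * B ⊔ span {(m : R)} = A := by
  apply le_antisymm
  · refine sup_le Ideal.mul_le_left ?_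
    rw [span_singleton_le_iff_mem]; exact mem_of_absNorm hA
  · intro x hx
    obtain ⟨u, v, huv⟩ := (Nat.isCoprime_iff_coprime.mpr hmn)
    have h1 : (u : R) * m + v * n = 1 := by exact_mod_cast congrArg (Int.cast : ℤ → R) huv
    rw [show x = x * (v * n) + (x * u) * m by linear_combination (-x) * h1]
    refine add_mem (Ideal.mem_sup_left ?_) (Ideal.mem_sup_right ?_)
    · exact Ideal.mul_mem_mul hx (Ideal.mul_mem_left _ _ (mem_of_absNorm hB))
    · exact Ideal.mul_mem_left _ _ (mem_span_singleton_self _)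

lemma sup_mul_sup {m n : ℕ} (hmn : m.Coprime n) {I : Ideal R} (hI : absNorm I = m * n) :
    (I ⊔ span {(m : R)}) * (I ⊔ span {(n : R)}) = I := by
  have hm : ((m : R) * n) ∈ I := by exact_mod_cast mem_of_absNorm hI
  apply le_antisymm
  · rw [Ideal.sup_mul, Ideal.mul_sup, Ideal.mul_sup]
    refine sup_le (sup_le Ideal.mul_le_left Ideal.mul_le_left) (sup_le Ideal.mul_le_right ?_)
    rw [Ideal.span_singleton_mul_span_singleton, span_singleton_le_iff_mem]
    exact hm
  · intro x hx
    obtain ⟨u, v, huv⟩ := (Nat.isCoprime_iff_coprime.mpr hmn)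
    have h1 : (u : R) * m + v * n = 1 := by exact_mod_cast congrArg (Int.cast : ℤ → R) huv
    rw [show x = (u * m) * x + x * (v * n) by linear_combination (-x) * h1]
    refine add_mem (Ideal.mul_mem_mul ?_ ?_) (Ideal.mul_mem_mul ?_ ?_)
    · exact Ideal.mem_sup_right (Ideal.mul_mem_left _ _ (mem_span_singleton_self _))
    · exact Ideal.mem_sup_left hx
    · exact Ideal.mem_sup_left hx
    · exact Ideal.mem_sup_right (Ideal.mul_mem_left _ _ (mem_span_singleton_self _))

lemma norm_sup {m n : ℕ} (hm : m ≠ 0) (hn : n ≠ 0) (hmn : m.Coprime n) {I : Ideal R}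
    (hI : absNorm I = m * n) :
    absNorm (I ⊔ span {(m : R)}) = m ∧ absNorm (I ⊔ span {(n : R)}) = n := by
  have h1 : absNorm (I ⊔ span {(m : R)}) ∣ m ^ Module.finrank ℤ R :=
    norm_span_nat (R := R) m ▸ absNorm_dvd_absNorm_of_le le_sup_right
  have h2 : absNorm (I ⊔ span {(n : R)}) ∣ n ^ Module.finrank ℤ R :=
    norm_span_nat (R := R) n ▸ absNorm_dvd_absNorm_of_le le_sup_right
  have h3 := congrArg absNorm (sup_mul_sup hmn hI)
  rw [map_mul, hI] at h3
  set a := absNorm (I ⊔ span {(m : R)})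
  set b := absNorm (I ⊔ span {(n : R)})
  have c1 : a.Coprime n := Nat.Coprime.coprime_dvd_left h1 (Nat.Coprime.pow_left _ hmn)
  have c2 : b.Coprime m := Nat.Coprime.coprime_dvd_left h2 (Nat.Coprime.pow_left _ hmn.symm)
  have ham : a ∣ m := c1.dvd_of_dvd_mul_right (h3 ▸ dvd_mul_right a b)
  have hbn : b ∣ n := c2.dvd_of_dvd_mul_left (h3 ▸ dvd_mul_left b a)
  have hma : m ∣ a := c2.symm.dvd_of_dvd_mul_right (h3 ▸ dvd_mul_right m n)
  have hnb : n ∣ b := c1.symm.dvd_of_dvd_mul_left (h3 ▸ dvd_mul_left n m)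
  exact ⟨Nat.dvd_antisymm ham hma, Nat.dvd_antisymm hbn hnb⟩

lemma cnt_mul {m n : ℕ} (hm : m ≠ 0) (hn : n ≠ 0) (hmn : m.Coprime n) :
    cnt R (m * n) = cnt R m * cnt R n := by
  unfold cnt
  rw [← Nat.card_prod]
  refine Nat.card_congr
    { toFun := fun I => (⟨_, (norm_sup hm hn hmn I.2).1⟩, ⟨_, (norm_sup hm hn hmn I.2).2⟩)
      invFun := fun x => ⟨x.1.1 * x.2.1, by rw [map_mul, x.1.2, x.2.2]⟩
      left_inv := fun I => Subtype.ext (sup_mul_sup hmn I.2)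
      right_inv := fun x => ?_ }
  refine Prod.ext (Subtype.ext (sup_span_eq hmn x.1.2 x.2.2)) (Subtype.ext ?_)
  change x.1.1 * x.2.1 ⊔ _ = _
  rw [mul_comm]
  exact sup_span_eq hmn.symm x.2.2 x.1.2

lemma cnt_one : cnt R 1 = 1 := by
  unfold cnt
  rw [Nat.card_eq_one_iff_unique]
  refine ⟨⟨fun a b => Subtype.ext ?_⟩, ⟨⊤, by simp⟩⟩
  rw [absNorm_eq_one_iff.mp a.2, absNorm_eq_one_iff.mp b.2]

/-- an ideal of norm `q^(k+1)` lies below a maximal ideal containing `q`. -/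
lemma exists_max {q : ℕ} (hq : q.Prime) {k : ℕ} {I : Ideal R} (hI : absNorm I = q ^ (k + 1)) :
    ∃ M : Ideal R, M.IsMaximal ∧ I ≤ M ∧ span {(q : R)} ≤ M := by
  have hne : I ≠ ⊤ := by
    intro h; rw [h, absNorm_top] at hI
    exact (Nat.one_lt_pow (by omega) hq.one_lt).ne hI
  obtain ⟨M, hM, hIM⟩ := Ideal.exists_le_maximal I hne
  refine ⟨M, hM, hIM, ?_⟩
  rw [span_singleton_le_iff_mem]
  have : ((q : R)) ^ (k + 1) ∈ M := hIM (by exact_mod_cast mem_of_absNorm hI)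
  exact hM.isPrime.mem_of_pow_mem _ this

lemma isMaximal_of_prime {q : ℕ} (hq : q.Prime) {P : Ideal R} (hP : absNorm P = q) :
    P.IsMaximal := by
  have h1 : P.IsPrime := Ideal.isPrime_of_irreducible_absNorm (hP ▸ hq)
  refine h1.isMaximal ?_
  rintro rfl
  simp at hP; exact hq.ne_zero hP.symm

lemma span_le_of_norm {q : ℕ} {P : Ideal R} (hP : absNorm P = q) : span {(q : R)} ≤ P := by
  rw [span_singleton_le_iff_mem]; exact mem_of_absNorm hP

lemma eq_of_le_of_norm {I J : Ideal R} (h : I ≤ J) (hn : absNorm I = absNorm J)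
    (h0 : absNorm I ≠ 0) : I = J := by
  obtain ⟨C, rfl⟩ := Ideal.dvd_iff_le.mpr h
  rw [map_mul] at hn h0
  have hJ : absNorm J ≠ 0 := left_ne_zero_of_mul h0
  have : absNorm C = 1 := by
    apply Nat.eq_of_mul_eq_mul_left (Nat.pos_of_ne_zero hJ); simpa using hn
  rw [absNorm_eq_one_iff] at this
  simp [this]

lemma cnt_pow_inert (hr : Module.finrank ℤ R = 2) {q : ℕ} (hq : q.Prime) (h : cnt R q = 0) (k : ℕ) :
    cnt R (q ^ (k + 2)) = cnt R (q ^ k) := by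
  have hno : ∀ P : Ideal R, absNorm P ≠ q := by
    intro P hP
    have hfin : Finite {I : Ideal R // absNorm I = q} := (Ideal.finite_setOfPred_absNorm_eq q)
    rw [cnt, Nat.card_eq_zero] at h
    rcases h with h | h
    · exact h.elim ⟨P, hP⟩
    · exact not_finite_iff_infinite.mpr h hfin
  have hN : absNorm (span {(q : R)}) = q ^ 2 := by rw [norm_span_nat, hr]
  have hq0 : (span {(q : R)}) ≠ ⊥ := by
    simpa using hq.ne_zero
  have key : ∀ j (I : Ideal R), absNorm I = q ^ (j + 1) → I ≤ span {(q : R)} := by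
    intro j I hI
    obtain ⟨M, hM, hIM, hqM⟩ := exists_max hq hI
    have : absNorm M ∣ q ^ 2 := hN ▸ absNorm_dvd_absNorm_of_le hqM
    obtain ⟨i, hi, hMi⟩ := (Nat.dvd_prime_pow hq).mp this
    have : i = 2 := by
      interval_cases i
      · exact absurd (absNorm_eq_one_iff.mp (by simpa using hMi)) hM.ne_top
      · exact absurd (by simpa using hMi) (hno M)
      · rfl
    rw [eq_of_le_of_norm hqM (by rw [hN, hMi, this]) (by rw [hN]; exact pow_ne_zero _ hq.ne_zero)]
    exact hIM
  symm
  refine Nat.card_congr (Equiv.ofBijective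
    (fun I => ⟨span {(q : R)} * I.1, by rw [map_mul, hN, I.2]; ring⟩) ⟨?_, ?_⟩)
  · intro I J hIJ
    exact Subtype.ext (mul_left_cancel₀ hq0 (Subtype.ext_iff.mp hIJ))
  · rintro ⟨I, hI⟩
    obtain ⟨J, hJ⟩ := Ideal.dvd_iff_le.mpr (key (k + 1) I hI)
    refine ⟨⟨J, ?_⟩, Subtype.ext hJ.symm⟩
    rw [hJ, map_mul, hN] at hI
    apply Nat.eq_of_mul_eq_mul_left (pow_pos hq.pos 2); rw [hI]; ring

lemma form_of_two {q : ℕ} (hq : q.Prime) {P Q : Ideal R} (hP : absNorm P = q)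
    (hQ : absNorm Q = q) (hPQ : P * Q = span {(q : R)}) (k : ℕ) (I : Ideal R)
    (hI : absNorm I = q ^ k) : ∃ i j, i + j = k ∧ I = P ^ i * Q ^ j := by
  induction k generalizing I with
  | zero =>
    refine ⟨0, 0, rfl, ?_⟩
    simpa using absNorm_eq_one_iff.mp (by simpa using hI)
  | succ k ih =>
    obtain ⟨M, hM, hIM, hqM⟩ := exists_max hq hI
    rw [← hPQ] at hqM
    rcases hM.isPrime.mul_le.mp hqM with h | h
    · have := (isMaximal_of_prime hq hP).eq_of_le hM.ne_top h
      obtain ⟨J, hJ⟩ := Ideal.dvd_iff_le.mpr (this ▸ hIM)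
      rw [hJ, map_mul, hP] at hI
      obtain ⟨i, j, hij, rfl⟩ := ih J (by
        apply Nat.eq_of_mul_eq_mul_left hq.pos; rw [hI]; ring)
      exact ⟨i + 1, j, by omega, by rw [hJ]; ring⟩
    · have := (isMaximal_of_prime hq hQ).eq_of_le hM.ne_top h
      obtain ⟨J, hJ⟩ := Ideal.dvd_iff_le.mpr (this ▸ hIM)
      rw [hJ, map_mul, hQ] at hI
      obtain ⟨i, j, hij, rfl⟩ := ih J (by
        apply Nat.eq_of_mul_eq_mul_left hq.pos; rw [hI]; ring)
      exact ⟨i, j + 1, by omega, by rw [hJ]; ring⟩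

lemma cnt_pow_ram (hr : Module.finrank ℤ R = 2) {q : ℕ} (hq : q.Prime) (h : cnt R q = 1) (k : ℕ) :
    cnt R (q ^ k) = 1 := by
  have hN : absNorm (span {(q : R)}) = q ^ 2 := by rw [norm_span_nat, hr]
  rw [cnt, Nat.card_eq_one_iff_unique] at h
  obtain ⟨⟨hs⟩, ⟨P, hP⟩⟩ := h
  obtain ⟨Q, hQ⟩ := Ideal.dvd_iff_le.mpr (span_le_of_norm hP)
  have hQn : absNorm Q = q := by
    rw [hQ, map_mul, hP] at hN
    apply Nat.eq_of_mul_eq_mul_left hq.pos; rw [hN]; ring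
  have hQP : Q = P := congrArg Subtype.val (hs ⟨Q, hQn⟩ ⟨P, hP⟩)
  subst hQP
  have key := form_of_two hq hP hP hQ.symm
  rw [cnt, Nat.card_eq_one_iff_unique]
  refine ⟨⟨fun a b => Subtype.ext ?_⟩, ⟨Q ^ k, by simp [hP]⟩⟩
  obtain ⟨i, j, hij, h1⟩ := key k a.1 a.2
  obtain ⟨i', j', hij', h2⟩ := key k b.1 b.2
  rw [h1, h2, ← pow_add, ← pow_add, hij, hij']

lemma cnt_pow_split (hr : Module.finrank ℤ R = 2) {q : ℕ} (hq : q.Prime) (h : cnt R q = 2) (k : ℕ) :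
    cnt R (q ^ k) = k + 1 := by
  have hN : absNorm (span {(q : R)}) = q ^ 2 := by rw [norm_span_nat, hr]
  rw [cnt, Nat.card_eq_two_iff] at h
  obtain ⟨⟨P, hP⟩, ⟨Q, hQ⟩, hne, -⟩ := h
  replace hne : P ≠ Q := fun h => hne (Subtype.ext h)
  have hPm := isMaximal_of_prime hq hP
  have hQm := isMaximal_of_prime hq hQ
  have hP0 : P ≠ ⊥ := by rintro rfl; simp at hP; exact hq.ne_zero hP.symm
  have hQ0 : Q ≠ ⊥ := by rintro rfl; simp at hQ; exact hq.ne_zero hQ.symm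
  have hcop : P ⊔ Q = ⊤ := hPm.coprime_of_ne hQm hne
  have hPQ : P * Q = span {(q : R)} := by
    symm
    apply eq_of_le_of_norm
    · rw [Ideal.mul_eq_inf_of_coprime hcop]
      exact le_inf (span_le_of_norm hP) (span_le_of_norm hQ)
    · rw [hN, map_mul, hP, hQ, sq]
    · rw [hN]; exact pow_ne_zero _ hq.ne_zero
  have key := form_of_two hq hP hQ hPQ
  have aux : ∀ i d j j', P ^ (i + (d + 1)) * Q ^ j ≠ P ^ i * Q ^ j' := by
    intro i d j j' h
    rw [pow_add, mul_assoc] at h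
    have h2 := mul_left_cancel₀ (pow_ne_zero i hP0) h
    have h3 : Q ^ j' ≤ P := by
      rw [← h2]
      exact Ideal.dvd_iff_le.mp ⟨P ^ d * Q ^ j, by ring⟩
    have h4 := hPm.isPrime.le_of_pow_le h3
    exact hne (hQm.eq_of_le hPm.ne_top h4).symm
  have : Nat.card (Fin (k + 1)) = k + 1 := by simp
  rw [← this]
  symm
  refine Nat.card_congr (Equiv.ofBijective
    (fun i : Fin (k + 1) => (⟨P ^ i.1 * Q ^ (k - i.1), by
      rw [map_mul, map_pow, map_pow, hP, hQ, ← pow_add]; congr 1; omega⟩ :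
      {I : Ideal R // absNorm I = q ^ k})) ⟨?_, ?_⟩)
  · intro i j hij
    have hij := Subtype.ext_iff.mp hij
    simp only at hij
    rcases lt_trichotomy i.1 j.1 with hlt | heq | hlt
    · obtain ⟨d, hd⟩ := Nat.exists_eq_add_of_lt hlt
      rw [hd] at hij
      exact absurd hij.symm (by rw [add_assoc i.1]; exact aux _ _ _ _)
    · exact Fin.ext heq
    · obtain ⟨d, hd⟩ := Nat.exists_eq_add_of_lt hlt
      rw [hd] at hij
      exact absurd hij (by rw [add_assoc j.1]; exact aux _ _ _ _)
  · rintro ⟨I, hI⟩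
    obtain ⟨i, j, hij, h1⟩ := key k I hI
    refine ⟨⟨i, by omega⟩, Subtype.ext ?_⟩
    simp only [h1]
    congr 2; omega

variable (R) in
noncomputable def cntA : ArithmeticFunction ℤ := ⟨fun n => if n = 0 then 0 else (cnt R n : ℤ), by simp⟩

def legA (p : ℕ) [Fact p.Prime] : ArithmeticFunction ℤ := ⟨fun n => legendreSym p n, by simp⟩

open ArithmeticFunction in
lemma cnt_eq_sum (hr : Module.finrank ℤ R = 2) (p : ℕ) [Fact p.Prime]
    (h : ∀ q : ℕ, q.Prime → (cnt R q : ℤ) = 1 + legendreSym p q) (n : ℕ) (hn : n ≠ 0) :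
    (cnt R n : ℤ) = ∑ d ∈ n.divisors, legendreSym p d := by
  have m1 : (cntA R).IsMultiplicative := by
    rw [IsMultiplicative.iff_ne_zero]
    refine ⟨by simp [cntA, cnt_one], fun {m n} hm hn hmn => ?_⟩
    simp [cntA, hm, hn, cnt_mul hm hn hmn]
  have m2 : (legA p).IsMultiplicative := by
    rw [IsMultiplicative.iff_ne_zero]
    refine ⟨by simp [legA], fun {m n} hm hn hmn => ?_⟩
    simp [legA, legendreSym.mul]
  have e : cntA R = ((ArithmeticFunction.zeta : ArithmeticFunction ℕ) : ArithmeticFunction ℤ) * legA p := by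
    rw [m1.eq_iff_eq_on_prime_powers _ _ (isMultiplicative_zeta.natCast.mul m2)]
    intro q k hq
    rw [coe_zeta_mul_apply, Nat.sum_divisors_prime_pow hq]
    have hq0 : q ^ k ≠ 0 := pow_ne_zero _ hq.ne_zero
    have e1 : ∀ i, legA p (q ^ i) = (legendreSym p q) ^ i := by
      intro i
      simp only [legA, ArithmeticFunction.coe_mk]
      push_cast
      exact map_pow (legendreSym.hom p) _ _
    simp only [e1, cntA, ArithmeticFunction.coe_mk, if_neg hq0]
    have hq1 := h q hq
    rcases (quadraticChar_isQuadratic (ZMod p)) ((q : ℤ) : ZMod p) with h0 | h0 | h0 <;>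
      change legendreSym p q = _ at h0 <;> rw [h0] at hq1 ⊢
    · rw [cnt_pow_ram hr hq (by exact_mod_cast hq1)]
      rw [Finset.sum_range_succ', Finset.sum_eq_zero] <;> simp
    · rw [cnt_pow_split hr hq (by norm_num at hq1; exact_mod_cast hq1)]
      simp
    · have hc : cnt R q = 0 := by norm_num at hq1; exact hq1
      induction k using Nat.twoStepInduction with
      | zero => simp [cnt_one]
      | one => simp [hc, Finset.sum_range_succ]
      | more k ih _ =>
        rw [cnt_pow_inert hr hq hc, ih (pow_ne_zero _ hq.ne_zero), Finset.sum_range_succ _ (k + 1 + 1),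
          Finset.sum_range_succ _ (k+1)]
        ring
  have := congrArg (fun f => f n) e
  simp only [coe_zeta_mul_apply] at this
  simpa [cntA, legA, hn] using this

end count
end CNF

namespace CNF
section field
open NumberField

variable {p : ℕ} {K : Type*} [Field K] [NumberField K] {s : K}

lemma exists_rep (hs : s ^ 2 = -(p : K)) (hgen : IntermediateField.adjoin ℚ {s} = ⊤) (x : K) :
    ∃ a b : ℚ, x = a + b * s := by
  have hintg : IsIntegral ℚ s := Algebra.IsIntegral.isIntegral s
  have h1 := IntermediateField.adjoin_simple_toSubalgebra_of_isAlgebraic hintg.isAlgebraic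
  rw [hgen, IntermediateField.top_toSubalgebra] at h1
  have hx : x ∈ Algebra.adjoin ℚ {s} := h1 ▸ Algebra.mem_top
  induction hx using Algebra.adjoin_induction with
  | mem x hx => rw [Set.mem_singleton_iff] at hx; exact ⟨0, 1, by simp [hx]⟩
  | algebraMap r => exact ⟨r, 0, by simp⟩
  | add x y _ _ h1 h2 =>
    obtain ⟨a, b, rfl⟩ := h1
    obtain ⟨c, d, rfl⟩ := h2
    exact ⟨a + c, b + d, by push_cast; ring⟩
  | mul x y _ _ h1 h2 =>
    obtain ⟨a, b, rfl⟩ := h1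
    obtain ⟨c, d, rfl⟩ := h2
    refine ⟨a * c - p * b * d, a * d + b * c, ?_⟩
    push_cast
    linear_combination (b * d : K) * hs

lemma rep_indep (hp : 0 < p) (hs : s ^ 2 = -(p : K)) {a b : ℚ} (h : (a : K) + b * s = 0) :
    a = 0 ∧ b = 0 := by
  have h1 : ((a ^ 2 + p * b ^ 2 : ℚ) : K) = 0 := by
    push_cast
    linear_combination (a - b * s) * h + (b : K) ^ 2 * hs
  have h2 : a ^ 2 + p * b ^ 2 = 0 := by exact_mod_cast h1
  have hp' : (0 : ℚ) < p := by exact_mod_cast hp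
  have hb : b ^ 2 = 0 := by nlinarith [sq_nonneg a, sq_nonneg b, mul_nonneg hp'.le (sq_nonneg b)]
  have ha : a ^ 2 = 0 := by rw [hb] at h2; linarith
  exact ⟨by simpa using ha, by simpa using hb⟩

noncomputable def basK (hp : 0 < p) (hs : s ^ 2 = -(p : K))
    (hgen : IntermediateField.adjoin ℚ {s} = ⊤) : Module.Basis (Fin 2) ℚ K :=
  Module.Basis.mk (v := ![1, s])
    (by
      rw [LinearIndependent.pair_iff]
      intro a b h
      refine rep_indep hp hs (a := a) (b := b) ?_
      simpa [Algebra.smul_def] using h)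
    (by
      intro x _
      obtain ⟨a, b, rfl⟩ := exists_rep hs hgen x
      rw [show ((a : K) + b * s) = a • (1 : K) + b • s by simp [Algebra.smul_def]]
      refine add_mem (Submodule.smul_mem _ _ (Submodule.subset_span ⟨0, by simp⟩))
        (Submodule.smul_mem _ _ (Submodule.subset_span ⟨1, by simp⟩)))

lemma finrankK (hp : 0 < p) (hs : s ^ 2 = -(p : K))
    (hgen : IntermediateField.adjoin ℚ {s} = ⊤) : Module.finrank ℚ K = 2 := by
  simp [Module.finrank_eq_card_basis (basK hp hs hgen)]

lemma mulMatrix (hp : 0 < p) (hs : s ^ 2 = -(p : K))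
    (hgen : IntermediateField.adjoin ℚ {s} = ⊤) (a b : ℚ) :
    Algebra.leftMulMatrix (basK hp hs hgen) (a + b * s) = !![a, -p * b; b, a] := by
  set B := basK hp hs hgen with hB
  have h0 : B 0 = 1 := by simp [hB, basK]
  have h1 : B 1 = s := by simp [hB, basK]
  have e0 : ((a : K) + b * s) * B 0 = a • B 0 + b • B 1 := by
    rw [h0, h1]; simp [Algebra.smul_def]
  have e1 : ((a : K) + b * s) * B 1 = (-p * b) • B 0 + a • B 1 := by
    rw [h0, h1]; simp [Algebra.smul_def]; linear_combination (b : K) * hs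
  ext i j
  rw [Algebra.leftMulMatrix_eq_repr_mul]
  fin_cases j
  · simp only [Fin.zero_eta, e0]
    fin_cases i <;> simp
  · simp only [Fin.mk_one, e1]
    fin_cases i <;> simp

lemma traceK (hp : 0 < p) (hs : s ^ 2 = -(p : K))
    (hgen : IntermediateField.adjoin ℚ {s} = ⊤) (a b : ℚ) :
    Algebra.trace ℚ K (a + b * s) = 2 * a := by
  rw [Algebra.trace_eq_matrix_trace (basK hp hs hgen), mulMatrix]
  simp [Matrix.trace_fin_two]; ring

lemma normK (hp : 0 < p) (hs : s ^ 2 = -(p : K))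
    (hgen : IntermediateField.adjoin ℚ {s} = ⊤) (a b : ℚ) :
    Algebra.norm ℚ ((a : K) + b * s) = a ^ 2 + p * b ^ 2 := by
  rw [Algebra.norm_eq_matrix_det (basK hp hs hgen), mulMatrix]
  simp [Matrix.det_fin_two]; ring

/-- `ω = (1 + s)/2`. -/
lemma omega_int (hp4 : p % 4 = 3) (hs : s ^ 2 = -(p : K)) : IsIntegral ℤ ((1 + s) / 2) := by
  refine ⟨Polynomial.X ^ 2 - Polynomial.X + Polynomial.C (((p + 1) / 4 : ℕ) : ℤ), by monicity!, ?_⟩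
  obtain ⟨k, hk⟩ : ∃ k, p = 4 * k + 3 := ⟨p / 4, by omega⟩
  have : (p + 1) / 4 = k + 1 := by omega
  rw [this]
  have h2 : (p : K) = 4 * k + 3 := by exact_mod_cast congrArg (Nat.cast : ℕ → K) hk
  simp
  rw [h2] at hs
  linear_combination hs / 4

noncomputable def om (hp4 : p % 4 = 3) (hs : s ^ 2 = -(p : K)) : 𝓞 K := ⟨_, omega_int hp4 hs⟩

lemma om_coe (hp4 : p % 4 = 3) (hs : s ^ 2 = -(p : K)) : ((om hp4 hs : 𝓞 K) : K) = (1 + s) / 2 := rfl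

lemma om_rel (hp4 : p % 4 = 3) (hs : s ^ 2 = -(p : K)) :
    (om hp4 hs) ^ 2 - om hp4 hs + (((p + 1) / 4 : ℕ) : 𝓞 K) = 0 := by
  apply RingOfIntegers.ext
  obtain ⟨k, hk⟩ : ∃ k, p = 4 * k + 3 := ⟨p / 4, by omega⟩
  have : (p + 1) / 4 = k + 1 := by omega
  have h2 : (p : K) = 4 * k + 3 := by exact_mod_cast congrArg (Nat.cast : ℕ → K) hk
  rw [this]
  simp [om_coe]
  rw [h2] at hs
  linear_combination hs / 4

lemma int_rep (hpp : p.Prime) (hp4 : p % 4 = 3) (hs : s ^ 2 = -(p : K))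
    (hgen : IntermediateField.adjoin ℚ {s} = ⊤) (x : 𝓞 K) :
    ∃ m n : ℤ, x = m + n * om hp4 hs := by
  obtain ⟨a, b, hx⟩ := exists_rep hs hgen (x : K)
  have hi : IsIntegral ℤ (x : K) := x.2
  obtain ⟨A, hA⟩ := IsIntegrallyClosed.isIntegral_iff.mp (Algebra.isIntegral_trace (L := ℚ) hi)
  obtain ⟨N, hN⟩ := IsIntegrallyClosed.isIntegral_iff.mp (Algebra.isIntegral_norm ℚ hi)
  rw [hx, traceK hpp.pos hs hgen] at hA
  rw [hx, normK hpp.pos hs hgen] at hN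
  simp only [algebraMap_int_eq, eq_intCast] at hA hN
  -- `B = 2 b` is an integer
  have hB : (p : ℚ) * (2 * b) ^ 2 = ((4 * N - A ^ 2 : ℤ) : ℚ) := by
    push_cast; rw [hA, hN]; ring
  obtain ⟨B, hB'⟩ : ∃ B : ℤ, (B : ℚ) = 2 * b := by
    set β := 2 * b with hβ
    have hden : β.den = 1 := by
      have h1 : ((p : ℤ) * β.num ^ 2) = (4 * N - A ^ 2) * (β.den : ℤ) ^ 2 := by
        have hd : (β.den : ℚ) ≠ 0 := by exact_mod_cast β.den_nz
        have : (p : ℚ) * (β.num : ℚ) ^ 2 = ((4 * N - A ^ 2 : ℤ) : ℚ) * (β.den : ℚ) ^ 2 := by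
          rw [← hB]; nth_rewrite 2 [← Rat.num_div_den β]; field_simp
        exact_mod_cast this
      have h2 : (β.den : ℤ) ^ 2 ∣ (p : ℤ) := by
        have hc : IsCoprime ((β.den : ℤ) ^ 2) (β.num ^ 2) := by
          apply IsCoprime.pow
          rw [Int.isCoprime_iff_gcd_eq_one, Int.gcd_comm]
          exact β.reduced
        exact hc.dvd_of_dvd_mul_right (h1 ▸ Dvd.intro_left _ rfl)
      have h3 : β.den ^ 2 ∣ p := by exact_mod_cast h2
      have h4 : Squarefree p := hpp.prime.squarefree
      simpa using h4 β.den (by rwa [← sq])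
    exact ⟨β.num, by conv_rhs => rw [← Rat.num_div_den β, hden]; simp⟩
  rw [← hB'] at hB
  have hB2 : (p : ℤ) * B ^ 2 = 4 * N - A ^ 2 := by exact_mod_cast hB
  obtain ⟨k, hk⟩ : ∃ k, p = 4 * k + 3 := ⟨p / 4, by omega⟩
  have hpar : (2 : ℤ) ∣ A - B := by
    rw [hk] at hB2
    push_cast at hB2
    rcases Int.even_or_odd' A with ⟨u, rfl | rfl⟩ <;> rcases Int.even_or_odd' B with ⟨v, rfl | rfl⟩
    · omega
    · exfalso; ring_nf at hB2; omega
    · exfalso; ring_nf at hB2; omega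
    · omega
  obtain ⟨m, hm⟩ := hpar
  refine ⟨m, B, ?_⟩
  apply RingOfIntegers.ext
  have e1 : (2 * a : K) = A := by exact_mod_cast congrArg (Rat.cast : ℚ → K) hA.symm
  have e2 : (2 * b : K) = B := by exact_mod_cast congrArg (Rat.cast : ℚ → K) hB'.symm
  have e3 : ((A : K) - B) = 2 * m := by exact_mod_cast congrArg (Int.cast : ℤ → K) hm
  rw [hx]
  simp [om_coe]
  linear_combination e1 / 2 + s * e2 / 2 + e3 / 2

lemma int_indep (hpp : p.Prime) (hp4 : p % 4 = 3) (hs : s ^ 2 = -(p : K)) {m n : ℤ}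
    (h : (m : 𝓞 K) + n * om hp4 hs = 0) : m = 0 ∧ n = 0 := by
  have h1 := congrArg (algebraMap (𝓞 K) K) h
  simp [om_coe] at h1
  have := rep_indep hpp.pos hs (a := m + n / 2) (b := n / 2) (by push_cast; linear_combination h1)
  have hn : (n : ℚ) = 0 := by linarith [this.2]
  have hm : (m : ℚ) = 0 := by linarith [this.1]
  exact ⟨by exact_mod_cast hm, by exact_mod_cast hn⟩

noncomputable def basO (hpp : p.Prime) (hp4 : p % 4 = 3) (hs : s ^ 2 = -(p : K))
    (hgen : IntermediateField.adjoin ℚ {s} = ⊤) : Module.Basis (Fin 2) ℤ (𝓞 K) :=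
  Module.Basis.mk (v := ![1, om hp4 hs])
    (by
      rw [LinearIndependent.pair_iff]
      intro a b h
      refine int_indep hpp hp4 hs (m := a) (n := b) ?_
      simpa using h)
    (by
      intro x _
      obtain ⟨a, b, rfl⟩ := int_rep hpp hp4 hs hgen x
      rw [show ((a : 𝓞 K) + b * om hp4 hs) = a • (1 : 𝓞 K) + b • om hp4 hs by simp]
      refine add_mem (Submodule.smul_mem _ _ (Submodule.subset_span ⟨0, by simp⟩))
        (Submodule.smul_mem _ _ (Submodule.subset_span ⟨1, by simp⟩)))

lemma finrankO (hpp : p.Prime) (hp4 : p % 4 = 3) (hs : s ^ 2 = -(p : K))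
    (hgen : IntermediateField.adjoin ℚ {s} = ⊤) : Module.finrank ℤ (𝓞 K) = 2 := by
  simp [Module.finrank_eq_card_basis (basO hpp hp4 hs hgen)]

lemma traceO (hpp : p.Prime) (hp4 : p % 4 = 3) (hs : s ^ 2 = -(p : K))
    (hgen : IntermediateField.adjoin ℚ {s} = ⊤) (m n : ℤ) :
    Algebra.trace ℤ (𝓞 K) (m + n * om hp4 hs) = 2 * m + n := by
  have h := Algebra.coe_trace_int (K := K) ((m : 𝓞 K) + n * om hp4 hs)
  have h2 : (((m : 𝓞 K) + n * om hp4 hs : 𝓞 K) : K) = ((m + n / 2 : ℚ) : K) + ((n / 2 : ℚ) : K) * s := by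
    push_cast [om_coe]; simp [om_coe]; ring
  rw [h2, traceK hpp.pos hs hgen] at h
  have : ((Algebra.trace ℤ (𝓞 K) (m + n * om hp4 hs) : ℤ) : ℚ) = ((2 * m + n : ℤ) : ℚ) := by
    rw [h]; push_cast; ring
  exact_mod_cast this

lemma discrK (hpp : p.Prime) (hp4 : p % 4 = 3) (hs : s ^ 2 = -(p : K))
    (hgen : IntermediateField.adjoin ℚ {s} = ⊤) : discr K = -p := by
  rw [← NumberField.discr_eq_discr K (basO hpp hp4 hs hgen), Algebra.discr_def,
    Matrix.det_fin_two]
  have t := traceO hpp hp4 hs hgen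
  have t00 := t 1 0
  have t01 := t 0 1
  have t11 := t (-((p + 1) / 4 : ℕ)) 1
  have e : om hp4 hs * om hp4 hs = ((-((p + 1) / 4 : ℕ) : ℤ) : 𝓞 K) + ((1 : ℤ) : 𝓞 K) * om hp4 hs := by
    have h := om_rel hp4 hs
    generalize (p + 1) / 4 = c at h ⊢
    push_cast; linear_combination h
  rw [← e] at t11
  simp only [Int.cast_one, Int.cast_zero, zero_mul, one_mul, add_zero, zero_add] at t00 t01
  simp [Algebra.traceMatrix, Algebra.traceForm_apply, basO, t00, t01, t11]
  obtain ⟨k, hk⟩ : ∃ k, p = 4 * k + 3 := ⟨p / 4, by omega⟩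
  have : (p + 1) / 4 = k + 1 := by omega
  omega

noncomputable def pbO (hpp : p.Prime) (hp4 : p % 4 = 3) (hs : s ^ 2 = -(p : K))
    (hgen : IntermediateField.adjoin ℚ {s} = ⊤) : PowerBasis ℤ (𝓞 K) where
  gen := om hp4 hs
  dim := 2
  basis := basO hpp hp4 hs hgen
  basis_eq_pow i := by fin_cases i <;> simp [basO]

open Polynomial in
lemma minpolyO (hpp : p.Prime) (hp4 : p % 4 = 3) (hs : s ^ 2 = -(p : K))
    (hgen : IntermediateField.adjoin ℚ {s} = ⊤) :
    minpoly ℤ (pbO hpp hp4 hs hgen).gen = X ^ 2 - X + C (((p + 1) / 4 : ℕ) : ℤ) := by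
  have hintg : IsIntegral ℤ (pbO hpp hp4 hs hgen).gen := Algebra.IsIntegral.isIntegral _
  symm
  refine Polynomial.eq_of_monic_of_dvd_of_natDegree_le (minpoly.monic hintg) (by monicity!) ?_ ?_
  · refine minpoly.isIntegrallyClosed_dvd hintg ?_
    have h := om_rel hp4 hs
    generalize (p + 1) / 4 = c at h ⊢
    simpa [pbO] using h
  · rw [PowerBasis.natDegree_minpoly]
    change _ ≤ 2
    compute_degree

lemma cnt_roots (hpp : p.Prime) (hp4 : p % 4 = 3) (hs : s ^ 2 = -(p : K))
    (hgen : IntermediateField.adjoin ℚ {s} = ⊤) (q : ℕ) [Fact q.Prime] :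
    cnt (𝓞 K) q = Nat.card {r : ZMod q // r ^ 2 - r + ((p + 1) / 4 : ℕ) = 0} := by
  have e1 : {r : ZMod q // r ^ 2 - r + ((p + 1) / 4 : ℕ) = 0} ≃ (𝓞 K →ₐ[ℤ] ZMod q) := by
    refine (Equiv.subtypeEquivRight fun r => ?_).trans (pbO hpp hp4 hs hgen).liftEquiv.symm
    rw [minpolyO]
    generalize (p + 1) / 4 = c
    simp
  rw [Nat.card_congr e1, cnt]
  symm
  have hsurj : ∀ f : 𝓞 K →ₐ[ℤ] ZMod q, Function.Surjective f := fun f y =>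
    ⟨(y.val : 𝓞 K), by simp [-ZMod.natCast_val, ZMod.natCast_zmod_val]⟩
  refine Nat.card_congr (Equiv.ofBijective (fun f => ⟨RingHom.ker f, ?_⟩) ⟨?_, ?_⟩)
  · rw [Ideal.absNorm_apply, Submodule.cardQuot_apply]
    have := Nat.card_congr (RingHom.quotientKerEquivOfSurjective (f := f.toRingHom) (hsurj f)).toEquiv
    rw [Nat.card_zmod] at this
    exact this
  · intro f g hfg
    have hfg : RingHom.ker f = RingHom.ker g := Subtype.ext_iff.mp hfg
    ext x
    have : x - ((f x).val : 𝓞 K) ∈ RingHom.ker f := by simp [RingHom.mem_ker, -ZMod.natCast_val, ZMod.natCast_zmod_val]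
    rw [hfg, RingHom.mem_ker] at this
    simp [-ZMod.natCast_val, ZMod.natCast_zmod_val] at this
    exact (sub_eq_zero.mp this).symm
  · rintro ⟨I, hI⟩
    rw [Ideal.absNorm_apply, Submodule.cardQuot_apply] at hI
    have hq := (Fact.out : q.Prime)
    have : Finite (𝓞 K ⧸ I) := Nat.finite_of_card_ne_zero (hI ▸ hq.ne_zero)
    have := Fintype.ofFinite (𝓞 K ⧸ I)
    let e := (ZMod.ringEquivOfPrime (𝓞 K ⧸ I) hq (by rw [← hI, Nat.card_eq_fintype_card]))
    refine ⟨((e.symm : (𝓞 K ⧸ I) →+* ZMod q).comp (Ideal.Quotient.mk I)).toIntAlgHom, Subtype.ext ?_⟩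
    ext x
    simp [RingHom.mem_ker, Ideal.Quotient.eq_zero_iff_mem]

lemma roots_two_a : Nat.card {r : ZMod 2 // r ^ 2 - r + 1 = 0} = 0 := by
  rw [Nat.card_eq_fintype_card]; decide

lemma roots_two_b : Nat.card {r : ZMod 2 // r ^ 2 - r + 0 = 0} = 2 := by
  rw [Nat.card_eq_fintype_card]; decide

lemma roots_leg [Fact p.Prime] (hp4 : p % 4 = 3) (q : ℕ) [Fact q.Prime] :
    (Nat.card {r : ZMod q // r ^ 2 - r + ((p + 1) / 4 : ℕ) = 0} : ℤ) = 1 + legendreSym p q := by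
  have hp2 : p ≠ 2 := by rintro rfl; omega
  obtain ⟨k, hk⟩ : ∃ k, p = 4 * k + 3 := ⟨p / 4, by omega⟩
  have hk1 : (p + 1) / 4 = k + 1 := by omega
  rw [hk1]
  by_cases hq : q = 2
  · subst hq
    rw [show (((2 : ℕ) : ℤ)) = 2 by rfl, legendreSym.at_two hp2]
    rcases Nat.even_or_odd' k with ⟨j, rfl | rfl⟩
    · have h1 : ((2 * j + 1 : ℕ) : ZMod 2) = 1 := by
        push_cast; rw [show (2 : ZMod 2) = 0 from rfl]; simp
      have h2 : (p : ZMod 8) = 3 := by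
        rw [hk]; push_cast; have h8 : (8 : ZMod 8) = 0 := rfl
        linear_combination (j : ZMod 8) * h8
      rw [h2]
      simp only [h1]
      rw [roots_two_a]
      decide
    · have h1 : ((2 * j + 1 + 1 : ℕ) : ZMod 2) = 0 := by
        push_cast; rw [show (2 : ZMod 2) = 0 from rfl]; simp; rfl
      have h2 : (p : ZMod 8) = 7 := by
        rw [hk]; push_cast; have h8 : (8 : ZMod 8) = 0 := rfl
        linear_combination (j : ZMod 8) * h8
      rw [h2]
      simp only [h1]
      rw [roots_two_b]
      decide
  · have hpz : (p : ZMod q) = 4 * k + 3 := by rw [hk]; push_cast; rfl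
    have h2 : (2 : ZMod q) ≠ 0 := by
      intro h
      have : ((2 : ℕ) : ZMod q) = 0 := by exact_mod_cast h
      rw [ZMod.natCast_eq_zero_iff] at this
      exact hq ((Nat.prime_dvd_prime_iff_eq Fact.out Nat.prime_two).mp this)
    have e : {r : ZMod q // r ^ 2 - r + (k + 1 : ℕ) = 0} ≃
        {y : ZMod q // y ^ 2 = ((-p : ℤ) : ZMod q)} :=
      { toFun := fun r => ⟨2 * r.1 - 1, by
          have := r.2; push_cast at this ⊢; rw [hpz]; linear_combination 4 * this⟩
        invFun := fun y => ⟨(y.1 + 1) / 2, by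
          have := y.2; push_cast at this ⊢; rw [hpz] at this; field_simp; linear_combination this⟩
        left_inv := fun r => Subtype.ext (by simp; field_simp)
        right_inv := fun y => Subtype.ext (by simp; field_simp; ring) }
    have hc := legendreSym.card_sqrts q hq (-p)
    rw [Set.toFinset_card, ← Nat.card_eq_fintype_card] at hc
    rw [Nat.card_congr e]
    refine Eq.trans hc ?_
    rw [add_comm]
    congr 1
    rw [neg_eq_neg_one_mul, legendreSym.mul, legendreSym.at_neg_one hq]
    have hqo : q % 2 = 1 := (Nat.Prime.eq_two_or_odd Fact.out).resolve_left hq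
    rw [legendreSym.quadratic_reciprocity' hp2 hq, ZMod.χ₄_eq_neg_one_pow hqo, ← mul_assoc, ← pow_add]
    have : Even (q / 2 + p / 2 * (q / 2)) := by
      rw [show q / 2 + p / 2 * (q / 2) = (p / 2 + 1) * (q / 2) by ring]
      exact Even.mul_right ⟨k + 1, by omega⟩ _
    rw [this.neg_one_pow, one_mul]

lemma cnt_leg [Fact p.Prime] (hp4 : p % 4 = 3) (hs : s ^ 2 = -(p : K))
    (hgen : IntermediateField.adjoin ℚ {s} = ⊤) (n : ℕ) (hn : n ≠ 0) :
    (cnt (𝓞 K) n : ℤ) = ∑ d ∈ n.divisors, legendreSym p d := by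
  refine cnt_eq_sum (finrankO Fact.out hp4 hs hgen) p (fun q hq => ?_) n hn
  have : Fact q.Prime := ⟨hq⟩
  rw [cnt_roots Fact.out hp4 hs hgen, roots_leg hp4]

end field
end CNF

namespace CNF
section residue
open NumberField NumberField.Units NumberField.InfinitePlace

variable {p : ℕ} {K : Type*} [Field K] [NumberField K] {s : K}

lemma tot_complex (hp : 0 < p) (hs : s ^ 2 = -(p : K)) : IsTotallyComplex K where
  isComplex v := by
    rw [← not_isReal_iff_isComplex]
    intro hv
    have h := congrArg (embedding_of_isReal hv) hs
    simp at h
    have : (0 : ℝ) < p := by exact_mod_cast hp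
    nlinarith [sq_nonneg (embedding_of_isReal hv s)]

lemma nrC (hp : 0 < p) (hs : s ^ 2 = -(p : K)) (hgen : IntermediateField.adjoin ℚ {s} = ⊤) :
    nrComplexPlaces K = 1 := by
  have := tot_complex hp hs
  have h := IsTotallyComplex.finrank (K := K)
  rw [finrankK hp hs hgen] at h
  omega

lemma reg_one (hp : 0 < p) (hs : s ^ 2 = -(p : K)) (hgen : IntermediateField.adjoin ℚ {s} = ⊤) :
    regulator K = 1 := by
  classical
  have := tot_complex hp hs
  have hc : Fintype.card (InfinitePlace K) = 1 := by
    rw [card_eq_nrRealPlaces_add_nrComplexPlaces, nrC hp hs hgen, IsTotallyComplex.nrRealPlaces_eq_zero]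
  have : IsEmpty {w : InfinitePlace K // w ≠ dirichletUnitTheorem.w₀} :=
    ⟨fun w => w.2 (Fintype.card_le_one_iff.mp hc.le _ _)⟩
  rw [regulator_eq_det', Matrix.det_isEmpty, abs_one]

lemma torsion_two (hpp : p.Prime) (hp4 : p % 4 = 3) (hp3 : p ≠ 3) (hs : s ^ 2 = -(p : K))
    (hgen : IntermediateField.adjoin ℚ {s} = ⊤) : torsionOrder K = 2 := by
  have hun : ∀ u : (𝓞 K)ˣ, u = 1 ∨ u = -1 := by
    intro u
    obtain ⟨m, n, hmn⟩ := int_rep hpp hp4 hs hgen (u : 𝓞 K)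
    have hN := NumberField.isUnit_iff_norm.mp u.isUnit
    have h2 : (((u : 𝓞 K)) : K) = ((m + n / 2 : ℚ) : K) + ((n / 2 : ℚ) : K) * s := by
      rw [hmn]; simp [om_coe]; ring
    rw [RingOfIntegers.coe_norm, h2, normK hpp.pos hs hgen] at hN
    have hp0 : (0 : ℚ) < p := by exact_mod_cast hpp.pos
    rw [abs_of_nonneg (by positivity)] at hN
    have h4 : (2 * m + n) ^ 2 + (p : ℤ) * n ^ 2 = 4 := by
      have : (((2 * m + n) ^ 2 + (p : ℤ) * n ^ 2 : ℤ) : ℚ) = 4 := by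
        push_cast; linear_combination 4 * hN
      exact_mod_cast this
    have hp7 : (5 : ℤ) ≤ p := by
      have := hpp.two_le
      omega
    have hn : n = 0 := by
      by_contra hn
      have : 1 ≤ n ^ 2 := Int.one_le_abs hn |>.trans (by rw [← sq_abs]; nlinarith [Int.one_le_abs hn])
      nlinarith [sq_nonneg (2 * m + n)]
    subst hn
    have hm : m ^ 2 = 1 := by linarith
    rcases _root_.sq_eq_one_iff.mp hm with h | h
    · left; apply Units.ext; rw [hmn, h]; simp
    · right; apply Units.ext; rw [hmn, h]; simp
  have hle : torsionOrder K ≤ 2 := by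
    classical
    have hinj : Function.Injective (fun u : torsion K => decide ((u : (𝓞 K)ˣ) = 1)) := by
      intro a b hab
      simp only [decide_eq_decide] at hab
      apply Subtype.ext
      rcases hun a with h | h <;> rcases hun b with h' | h' <;> simp_all
    have := Nat.card_le_card_of_injective _ hinj
    simpa [torsionOrder] using this
  have h1 := even_torsionOrder K
  have h2 := torsionOrder_pos K
  obtain ⟨k, hk⟩ := h1
  omega

lemma residue_eq (hpp : p.Prime) (hp4 : p % 4 = 3) (hp3 : p ≠ 3) (hs : s ^ 2 = -(p : K))
    (hgen : IntermediateField.adjoin ℚ {s} = ⊤) :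
    dedekindZeta_residue K = Real.pi * classNumber K / Real.sqrt p := by
  have := tot_complex hpp.pos hs
  rw [dedekindZeta_residue_def, torsion_two hpp hp4 hp3 hs hgen, reg_one hpp.pos hs hgen,
    nrC hpp.pos hs hgen, IsTotallyComplex.nrRealPlaces_eq_zero, discrK hpp hp4 hs hgen]
  have hpos : (0 : ℝ) < Real.sqrt p := Real.sqrt_pos.mpr (by exact_mod_cast hpp.pos)
  simp
  field_simp

open Filter Topology in
/-- the value of `L(1+)`, via the class number formula -/
lemma tendsto_L [Fact p.Prime] (hp4 : p % 4 = 3) (hp3 : p ≠ 3) (hs : s ^ 2 = -(p : K))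
    (hgen : IntermediateField.adjoin ℚ {s} = ⊤) :
    Tendsto (fun t : ℝ => LSeries (fun n => (legendreSym p n : ℂ)) t) (𝓝[>] 1)
      (𝓝 ((Real.pi * classNumber K / Real.sqrt p : ℝ) : ℂ)) := by
  have hz := tendsto_sub_one_mul_dedekindZeta_nhdsGT K
  rw [residue_eq Fact.out hp4 hp3 hs hgen] at hz
  have hr : Tendsto (fun t : ℝ => ((t : ℂ) - 1) * riemannZeta t) (𝓝[>] 1) (𝓝 1) := by
    refine riemannZeta_residue_one.comp ?_
    rw [tendsto_nhdsWithin_iff]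
    constructor
    · exact (Complex.continuous_ofReal.tendsto' 1 1 (by simp)).mono_left nhdsWithin_le_nhds
    · filter_upwards [self_mem_nhdsWithin] with t ht
      simp only [Set.mem_compl_iff, Set.mem_singleton_iff]
      exact_mod_cast (ne_of_gt ht)
  have hb : ∀ n : ℕ, ‖(legendreSym p n : ℂ)‖ ≤ 1 := by
    intro n
    rcases (quadraticChar_isQuadratic (ZMod p)) ((n : ℤ) : ZMod p) with h0 | h0 | h0 <;>
      change legendreSym p n = _ at h0 <;> rw [h0] <;> simp
  have := hz.div hr one_ne_zero
  rw [div_one] at this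
  refine this.congr' ?_
  filter_upwards [self_mem_nhdsWithin] with t ht
  have ht : 1 < t := ht
  have ht' : 1 < ((t : ℂ)).re := by simpa
  have h1 : (t : ℂ) - 1 ≠ 0 := sub_ne_zero.mpr (by exact_mod_cast ht.ne')
  have hζ := riemannZeta_ne_zero_of_one_lt_re ht'
  have e : dedekindZeta K t = riemannZeta t * LSeries (fun n => (legendreSym p n : ℂ)) t := by
    rw [← LSeries_one_eq_riemannZeta ht', ← LSeries_convolution'
      (LSeriesSummable_one_iff.mpr ht')
      (LSeriesSummable_of_bounded_of_one_lt_re (fun n _ => hb n) ht'), dedekindZeta]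
    refine LSeries_congr (fun {n} hn => ?_) t
    rw [LSeries.convolution_def]
    have := cnt_leg hp4 hs hgen n hn
    simp only [Pi.one_apply, one_mul]
    rw [Nat.sum_divisorsAntidiagonal' (f := fun _ d => (legendreSym p d : ℂ))]
    have h3 : ((cnt (𝓞 K) n : ℤ) : ℂ) = ((∑ d ∈ n.divisors, legendreSym p d : ℤ) : ℂ) := by rw [this]
    push_cast at h3
    exact h3
  rw [Pi.div_apply] 
  rw [e]
  field_simp

end residue
end CNF

namespace CNF
section elem

lemma sum_refl (f : ℕ → ℤ) (m : ℕ) :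
    ∑ a ∈ Finset.range (2 * m), f (a + 1) =
      ∑ n ∈ Finset.range m, (f (n + 1) + f (2 * m + 1 - (n + 1))) := by
  rw [Finset.sum_add_distrib, two_mul, Finset.sum_range_add]
  congr 1
  rw [← Finset.sum_range_reflect]
  refine Finset.sum_congr rfl fun n hn => ?_
  rw [Finset.mem_range] at hn
  congr 1
  omega

lemma sum_even_odd (f : ℕ → ℤ) (m : ℕ) :
    ∑ a ∈ Finset.range (2 * m), f (a + 1) =
      ∑ n ∈ Finset.range m, (f (2 * (n + 1)) + f (2 * m + 1 - 2 * (n + 1))) := by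
  have h : ∑ n ∈ Finset.range m, f (2 * m + 1 - 2 * (n + 1)) = ∑ n ∈ Finset.range m, f (2 * n + 1) := by
    rw [← Finset.sum_range_reflect]
    refine Finset.sum_congr rfl fun n hn => ?_
    rw [Finset.mem_range] at hn
    congr 1
    omega
  rw [Finset.sum_add_distrib, h]
  clear h
  induction m with
  | zero => simp
  | succ m ih =>
    rw [show 2 * (m + 1) = 2 * m + 1 + 1 by ring, Finset.sum_range_succ, Finset.sum_range_succ, ih,
      Finset.sum_range_succ, Finset.sum_range_succ]
    ring_nf

lemma elem_final (p : ℕ) [Fact p.Prime] (hp4 : p % 4 = 3) (h : ℤ)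
    (H : (p : ℤ) * h = -∑ a ∈ Finset.range (p - 1), ((a : ℤ) + 1) * legendreSym p (a + 1)) :
    ∑ n ∈ Finset.Icc 1 ((p - 1) / 2), legendreSym p (n : ℤ) = (2 - legendreSym p 2) * h := by
  have hp2 : p ≠ 2 := by omega
  obtain ⟨m, hm⟩ : ∃ m, p = 2 * m + 1 := ⟨p / 2, by omega⟩
  have hneg : legendreSym p (-1) = -1 := by
    rw [legendreSym.at_neg_one hp2, ZMod.χ₄_nat_three_mod_four hp4]
  have hrefl : ∀ x : ℤ, legendreSym p (p - x) = - legendreSym p x := by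
    intro x
    have : legendreSym p (p - x) = legendreSym p (-1 * x) := by
      rw [legendreSym.mod p (p - x), legendreSym.mod p (-1 * x)]
      congr 1
      rw [sub_eq_add_neg, ← neg_one_mul, Int.add_emod_left]
    rw [this, legendreSym.mul, hneg]; ring
  have hA := sum_refl (fun a => (a : ℤ) * legendreSym p a) m
  have hB := sum_even_odd (fun a => (a : ℤ) * legendreSym p a) m
  have h2sq : legendreSym p 2 ^ 2 = 1 := by
    apply legendreSym.sq_one
    intro h0
    have : ((2 : ℕ) : ZMod p) = 0 := by exact_mod_cast h0
    rw [ZMod.natCast_eq_zero_iff] at this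
    exact hp2 ((Nat.prime_dvd_prime_iff_eq Fact.out Nat.prime_two).mp this)
  have hA' : ∑ n ∈ Finset.range m, (((n + 1 : ℕ) : ℤ) * legendreSym p (n + 1 : ℕ) +
      ((2 * m + 1 - (n + 1) : ℕ) : ℤ) * legendreSym p (2 * m + 1 - (n + 1) : ℕ)) =
      2 * ∑ n ∈ Finset.range m, ((n : ℤ) + 1) * legendreSym p (n + 1)
        - p * ∑ n ∈ Finset.range m, legendreSym p (n + 1) := by
    rw [Finset.mul_sum, Finset.mul_sum, ← Finset.sum_sub_distrib]
    refine Finset.sum_congr rfl fun n hn => ?_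
    rw [Finset.mem_range] at hn
    have e : ((2 * m + 1 - (n + 1) : ℕ) : ℤ) = p - (n + 1) := by omega
    rw [e, hrefl]
    push_cast
    ring
  have hB' : ∑ n ∈ Finset.range m, (((2 * (n + 1) : ℕ) : ℤ) * legendreSym p (2 * (n + 1) : ℕ) +
      ((2 * m + 1 - 2 * (n + 1) : ℕ) : ℤ) * legendreSym p (2 * m + 1 - 2 * (n + 1) : ℕ)) =
      legendreSym p 2 * (4 * ∑ n ∈ Finset.range m, ((n : ℤ) + 1) * legendreSym p (n + 1)
        - p * ∑ n ∈ Finset.range m, legendreSym p (n + 1)) := by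
    rw [Finset.mul_sum, Finset.mul_sum, ← Finset.sum_sub_distrib, Finset.mul_sum]
    refine Finset.sum_congr rfl fun n hn => ?_
    rw [Finset.mem_range] at hn
    have e : ((2 * m + 1 - 2 * (n + 1) : ℕ) : ℤ) = p - 2 * (n + 1) := by omega
    rw [e, hrefl]
    push_cast
    rw [legendreSym.mul]
    ring
  rw [hA'] at hA
  rw [hB'] at hB
  have e1 : p - 1 = 2 * m := by omega
  have e2 : (p - 1) / 2 = m := by omega
  rw [e1] at H
  rw [e2]
  have e3 : ∑ n ∈ Finset.Icc 1 m, legendreSym p (n : ℤ) = ∑ n ∈ Finset.range m, legendreSym p (n + 1) := by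
    rw [Finset.range_eq_Ico, ← Finset.Ico_add_one_right_eq_Icc, ← Finset.sum_Ico_add' (fun n : ℕ => legendreSym p (n : ℤ)) 0 m 1]
    push_cast; rfl
  rw [e3]
  push_cast at hA hB
  set S := ∑ a ∈ Finset.range (2 * m), ((a : ℤ) + 1) * legendreSym p (a + 1)
  set T := ∑ n ∈ Finset.range m, ((n : ℤ) + 1) * legendreSym p (n + 1)
  set X := ∑ n ∈ Finset.range m, legendreSym p (n + 1)
  set c := legendreSym p 2
  have hp0 : (p : ℤ) ≠ 0 := by have := (Fact.out : p.Prime).ne_zero; exact_mod_cast this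
  apply mul_left_cancel₀ hp0
  linear_combination -(2 - c) * H + 2 * hA - c * hB - (4 * T - p * X) * h2sq

end elem
end CNF

namespace CNF
section gauss
open Complex Filter Topology
open scoped Real

lemma tsum_mod (N : ℕ) [NeZero N] (f : ℤ → ℂ) (hf : Summable f) :
    ∑' n, f n = ∑ r : Fin N, ∑' m : ℤ, f (m * N + (r : ℕ)) := by
  have e := (Int.divModEquiv N).symm.trans (Equiv.refl ℤ)
  have h2 : Summable (fun x : Fin N × ℤ => f (x.2 * N + (x.1 : ℕ))) := by
    have := ((Equiv.prodComm (Fin N) ℤ).trans (Int.divModEquiv N).symm).summable_iff.mpr hf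
    refine this.congr fun x => ?_
    simp [Int.divModEquiv]
  rw [← ((Equiv.prodComm (Fin N) ℤ).trans (Int.divModEquiv N).symm).tsum_eq f]
  rw [← tsum_fintype (L := SummationFilter.unconditional _), ← h2.tsum_prod]
  refine tsum_congr fun x => ?_
  simp [Int.divModEquiv]

lemma summable_theta {τ : ℂ} (hτ : 0 < τ.im) :
    Summable (fun n : ℤ => cexp (π * I * (n : ℂ) ^ 2 * τ)) := by
  have := (hasSum_jacobiTheta₂_term 0 hτ).summable
  refine this.congr fun n => ?_
  simp [jacobiTheta₂_term]

/-- real Gaussian sums in a progression -/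
lemma tendsto_evenKernel (a : ℝ) :
    Tendsto (fun t : ℝ => (t ^ (1 / 2 : ℝ)) * HurwitzZeta.evenKernel a t) (𝓝[>] 0) (𝓝 1) := by
  obtain ⟨q, hq, hO⟩ := HurwitzZeta.isBigO_atTop_cosKernel_sub (a : UnitAddCircle)
  have h1 : Tendsto (fun x : ℝ => HurwitzZeta.cosKernel a x) atTop (𝓝 1) := by
    have h0 : Tendsto (fun x : ℝ => Real.exp (-q * x)) atTop (𝓝 0) := by
      refine Real.tendsto_exp_atBot.comp ?_
      exact tendsto_id.const_mul_atTop_of_neg (by linarith)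
    have := (hO.trans_tendsto h0).add_const 1
    simpa using this
  have h2 : Tendsto (fun t : ℝ => HurwitzZeta.cosKernel a (1 / t)) (𝓝[>] 0) (𝓝 1) := by
    refine h1.comp ?_
    have h3 := tendsto_inv_nhdsGT_zero (𝕜 := ℝ)
    refine h3.congr fun x => ?_
    rw [one_div]
  refine h2.congr' ?_
  filter_upwards [self_mem_nhdsWithin] with t ht
  rw [HurwitzZeta.evenKernel_functional_equation]
  have : (0 : ℝ) < t ^ (1 / 2 : ℝ) := Real.rpow_pos_of_pos ht _
  field_simp

/-- the quadratic exponential sum -/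
noncomputable def G (p : ℕ) : ℂ := ∑ r : Fin p, cexp (2 * π * I * ((r : ℕ) : ℂ) ^ 2 / p)

lemma theta_split (p : ℕ) [NeZero p] {ε : ℝ} (hε : 0 < ε) :
    jacobiTheta (2 / p + I * ε) = ∑ r : Fin p, cexp (2 * π * I * ((r : ℕ) : ℂ) ^ 2 / p) *
      ((HurwitzZeta.evenKernel (((r : ℕ) / p : ℝ)) (p ^ 2 * ε) : ℝ) : ℂ) := by
  have hp : (p : ℂ) ≠ 0 := by exact_mod_cast NeZero.ne p
  have hp' : (p : ℝ) ≠ 0 := by exact_mod_cast NeZero.ne p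
  have hp0 : (0 : ℝ) < p := by exact_mod_cast (NeZero.pos p)
  have him : 0 < (2 / p + I * ε : ℂ).im := by
    have : (2 / p + I * ε : ℂ) = ((2 / p : ℝ) : ℂ) + (ε : ℂ) * I := by push_cast; ring
    rw [this]; simpa using hε
  rw [jacobiTheta, tsum_mod p _ (summable_theta him)]
  refine Finset.sum_congr rfl fun r _ => ?_
  have h := HurwitzZeta.hasSum_int_evenKernel ((r : ℕ) / p : ℝ) (t := p ^ 2 * ε) (by positivity)
  have h' := (hasSum_ofReal.mpr h).mul_left (cexp (2 * π * I * ((r : ℕ) : ℂ) ^ 2 / p))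
  rw [← h'.tsum_eq]
  refine tsum_congr fun m => ?_
  push_cast
  rw [← Complex.exp_add, Complex.exp_eq_exp_iff_exists_int]
  refine ⟨p * m ^ 2 + 2 * m * (r : ℕ), ?_⟩
  push_cast
  field_simp
  ring_nf
  simp only [I_sq]
  ring

lemma tendsto_theta (p : ℕ) [NeZero p] :
    Tendsto (fun ε : ℝ => ((ε ^ (1 / 2 : ℝ) : ℝ) : ℂ) * jacobiTheta (2 / p + I * ε)) (𝓝[>] 0)
      (𝓝 (G p / p)) := by
  have hp : (p : ℂ) ≠ 0 := by exact_mod_cast NeZero.ne p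
  have hp0 : (0 : ℝ) < p := by exact_mod_cast (NeZero.pos p)
  have hl : Tendsto (fun ε : ℝ => (p : ℝ) ^ 2 * ε) (𝓝[>] 0) (𝓝[>] 0) := by
    rw [tendsto_nhdsWithin_iff]
    constructor
    · exact ((continuous_const.mul continuous_id).tendsto' 0 0 (by simp)).mono_left nhdsWithin_le_nhds
    · filter_upwards [self_mem_nhdsWithin] with t ht
      have : (0 : ℝ) < t := ht
      simp only [Set.mem_Ioi]; positivity
  have h : ∀ r : Fin p, Tendsto (fun ε : ℝ => cexp (2 * π * I * ((r : ℕ) : ℂ) ^ 2 / p) *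
      (((((p : ℝ) ^ 2 * ε) ^ (1 / 2 : ℝ) * HurwitzZeta.evenKernel (((r : ℕ) / p : ℝ)) (p ^ 2 * ε) : ℝ) : ℂ)) / p)
      (𝓝[>] 0) (𝓝 (cexp (2 * π * I * ((r : ℕ) : ℂ) ^ 2 / p) * ((1 : ℝ) : ℂ) / p)) := by
    intro r
    have := (tendsto_evenKernel ((r : ℕ) / p : ℝ)).comp hl
    exact ((((continuous_ofReal.tendsto 1).comp this).const_mul _).div_const _)
  have h2 := tendsto_finsetSum Finset.univ (fun r _ => h r)
  have e : ∑ r : Fin p, cexp (2 * π * I * ((r : ℕ) : ℂ) ^ 2 / p) * ((1 : ℝ) : ℂ) / p = G p / p := by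
    rw [G, Finset.sum_div]; simp
  rw [e] at h2
  refine h2.congr' ?_
  filter_upwards [self_mem_nhdsWithin] with t ht
  have ht : 0 < t := ht
  rw [theta_split p ht, Finset.mul_sum]
  refine Finset.sum_congr rfl fun r _ => ?_
  rw [Real.mul_rpow (by positivity) ht.le, ← Real.sqrt_eq_rpow, Real.sqrt_sq hp0.le]
  push_cast
  field_simp

lemma theta_S {τ : ℂ} (hτ : 0 < τ.im) :
    jacobiTheta (-1 / τ) = (-I * τ) ^ (1 / 2 : ℂ) * jacobiTheta τ := by
  have := jacobiTheta_S_smul ⟨τ, hτ⟩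
  rw [UpperHalfPlane.modular_S_smul] at this
  rw [← this]
  congr 1
  simp [neg_div, inv_neg]

lemma theta_quarter (p : ℕ) (hp4 : p % 4 = 3) {w : ℂ} (hw : 0 < w.im) :
    jacobiTheta (w - p / 2) = (1 - I) * jacobiTheta (4 * w) + I * jacobiTheta w := by
  have h1 : 0 < (w - p / 2 : ℂ).im := by
    have : (w - p / 2 : ℂ) = w - ((p / 2 : ℝ) : ℂ) := by push_cast; ring
    rw [this, sub_im, ofReal_im]; simpa
  obtain ⟨k, hk⟩ : ∃ k, p = 4 * k + 3 := ⟨p / 4, by omega⟩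
  have hA := tsum_mod 2 _ (summable_theta h1)
  have hB := tsum_mod 2 _ (summable_theta hw)
  rw [← jacobiTheta, Fin.sum_univ_two] at hA hB
  have hC : ∑' m : ℤ, cexp (π * I * ((m * (2 : ℕ) + ((0 : Fin 2) : ℕ) : ℤ) : ℂ) ^ 2 * w) = jacobiTheta (4 * w) := by
    rw [jacobiTheta]
    refine tsum_congr fun m => ?_
    congr 1; push_cast; simp; ring
  have hD : ∑' m : ℤ, cexp (π * I * ((m * (2 : ℕ) + ((0 : Fin 2) : ℕ) : ℤ) : ℂ) ^ 2 * (w - p / 2)) = jacobiTheta (4 * w) := by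
    rw [jacobiTheta]
    refine tsum_congr fun m => ?_
    rw [Complex.exp_eq_exp_iff_exists_int]
    refine ⟨-p * m ^ 2, ?_⟩
    push_cast; simp; ring
  have hE : ∑' m : ℤ, cexp (π * I * ((m * (2 : ℕ) + ((1 : Fin 2) : ℕ) : ℤ) : ℂ) ^ 2 * (w - p / 2)) =
      I * ∑' m : ℤ, cexp (π * I * ((m * (2 : ℕ) + ((1 : Fin 2) : ℕ) : ℤ) : ℂ) ^ 2 * w) := by
    rw [← tsum_mul_left]
    refine tsum_congr fun m => ?_
    have hI : I = cexp (π / 2 * I) := Complex.exp_pi_div_two_mul_I.symm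
    conv_rhs => enter [1]; rw [hI]
    rw [← Complex.exp_add, Complex.exp_eq_exp_iff_exists_int]
    refine ⟨-p * (m ^ 2 + m) - (k + 1), ?_⟩
    rw [hk]
    push_cast; simp; ring
  rw [hC] at hB
  rw [hD, hE] at hA
  rw [hA, hB]; ring

lemma tendsto_theta_one {α : Type*} {l : Filter α} {f : α → ℂ}
    (h : Tendsto (fun x => (f x).im) l atTop) : Tendsto (fun x => jacobiTheta (f x)) l (𝓝 1) := by
  have h0 : Tendsto (fun x => Real.exp (-π * (f x).im)) l (𝓝 0) := by
    refine Real.tendsto_exp_atBot.comp ?_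
    exact h.const_mul_atTop_of_neg (by linarith [Real.pi_pos])
  have := (isBigO_at_im_infty_jacobiTheta_sub_one.comp_tendsto (tendsto_comap_iff.mpr h)).trans_tendsto h0
  simpa using this.add_const 1

lemma cpow_half_mul {r : ℝ} (hr : 0 < r) {z : ℂ} (hz : z ≠ 0) :
    ((r : ℂ) * z) ^ (1 / 2 : ℂ) = ((r ^ (1 / 2 : ℝ) : ℝ) : ℂ) * z ^ (1 / 2 : ℂ) := by
  have hr' : (r : ℂ) ≠ 0 := by exact_mod_cast hr.ne'
  rw [cpow_def_of_ne_zero (mul_ne_zero hr' hz), cpow_def_of_ne_zero hz, Complex.log_ofReal_mul hr hz,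
    Real.rpow_def_of_pos hr, ofReal_exp, ← Complex.exp_add]
  congr 1
  push_cast
  ring

lemma G_eq (p : ℕ) [NeZero p] (hp4 : p % 4 = 3) : G p = I * Real.sqrt p := by
  have hp : (p : ℂ) ≠ 0 := by exact_mod_cast NeZero.ne p
  have hp0 : (0 : ℝ) < p := by exact_mod_cast (NeZero.pos p)
  -- the identity for fixed `ε`
  have key : ∀ ε : ℝ, 0 < ε →
      ((ε ^ (1 / 2 : ℝ) : ℝ) : ℂ) * jacobiTheta (2 / p + I * ε) * (-I * (2 / p + I * ε)) ^ (1 / 2 : ℂ) =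
      (2 / p * (2 / p + I * ε)) ^ (1 / 2 : ℂ) *
        ((1 - I) / 2 * jacobiTheta (I * (2 / p + I * ε) / (2 * p * ε)) +
          I * jacobiTheta (2 * I * (2 / p + I * ε) / (p * ε))) := by
    intro ε hε
    have hε' : (ε : ℂ) ≠ 0 := by exact_mod_cast hε.ne'
    have him : 0 < (2 / p + I * ε : ℂ).im := by
      have : (2 / p + I * ε : ℂ) = ((2 / p : ℝ) : ℂ) + (ε : ℂ) * I := by push_cast; ring
      rw [this]; simpa using hε
    have hu : (2 * I * (2 / p + I * ε) / (p * ε) : ℂ).im = 4 / (p ^ 2 * ε) := by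
      have : (2 * I * (2 / p + I * ε) / (p * ε) : ℂ) =
          ((-2 / p : ℝ) : ℂ) + ((4 / (p ^ 2 * ε) : ℝ) : ℂ) * I := by
        push_cast; field_simp; ring_nf; simp only [I_sq]; ring
      rw [this]
      simp only [add_im, ofReal_im, im_ofReal_mul, I_im, mul_one, zero_add]
    have hτ : (2 / p + I * ε : ℂ) ≠ 0 := by
      intro h; rw [h] at him; simp at him
    set τ : ℂ := 2 / p + I * ε with hτdef
    set u : ℂ := 2 * I * τ / (p * ε) with hudef
    have hu0 : 0 < u.im := by rw [hu]; positivity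
    have hune : u ≠ 0 := by
      intro h; rw [h] at hu0; simp at hu0
    have hu4 : 0 < (u / 4).im := by
      rw [show u / 4 = ((1 / 4 : ℝ) : ℂ) * u by push_cast; ring, im_ofReal_mul]; positivity
    have hw : 0 < (-1 / u).im := by
      rw [show (-1 / u) = -u⁻¹ by field_simp, neg_im, inv_im]
      have := normSq_pos.mpr hune
      rw [neg_div, neg_neg]; positivity
    have e1 := theta_S him
    have e2 : -1 / τ = -1 / u - p / 2 := by
      rw [hudef]
      have : (2 : ℂ) = p * τ - I * p * ε := by rw [hτdef]; field_simp; ring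
      field_simp
      ring_nf
      rw [hτdef]
      field_simp
      ring_nf
      simp only [I_sq]; ring
    rw [e2, theta_quarter p hp4 hw, theta_S hu0, show 4 * (-1 / u) = -1 / (u / 4) by field_simp,
      theta_S hu4] at e1
    have e4 : -I * (u / 4) = ((1 / 4 : ℝ) : ℂ) * (-I * u) := by push_cast; ring
    have e5 : 2 / p * τ = (ε : ℂ) * (-I * u) := by
      rw [hudef]; field_simp; ring_nf; simp only [I_sq]; ring
    have hIu : -I * u ≠ 0 := mul_ne_zero (neg_ne_zero.mpr I_ne_zero) hune
    rw [e4, cpow_half_mul (by norm_num) hIu] at e1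
    rw [e5, cpow_half_mul hε hIu, show I * τ / (2 * p * ε) = u / 4 by rw [hudef]; field_simp; ring]
    have e6 : ((1 / 4 : ℝ) ^ (1 / 2 : ℝ) : ℝ) = 1 / 2 := by
      rw [← Real.sqrt_eq_rpow, show (1 / 4 : ℝ) = (1 / 2) ^ 2 by norm_num]
      exact Real.sqrt_sq (by norm_num)
    rw [e6] at e1
    push_cast at e1
    linear_combination (-((ε ^ (1 / 2 : ℝ) : ℝ) : ℂ)) * e1
  have hτ : Tendsto (fun ε : ℝ => (2 / p + I * ε : ℂ)) (𝓝[>] 0) (𝓝 (2 / p)) := by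
    have : Continuous (fun ε : ℝ => (2 / p + I * ε : ℂ)) := by fun_prop
    exact (this.tendsto' 0 _ (by simp)).mono_left nhdsWithin_le_nhds
  have hre : ((2 / p : ℂ)) = ((2 / p : ℝ) : ℂ) := by push_cast; rfl
  have lim1 : Tendsto (fun ε : ℝ => (-I * (2 / p + I * ε : ℂ)) ^ (1 / 2 : ℂ)) (𝓝[>] 0)
      (𝓝 ((-I * (2 / p : ℂ)) ^ (1 / 2 : ℂ))) := by
    refine (hτ.const_mul (-I)).cpow tendsto_const_nhds ?_
    right
    rw [hre, mul_comm, im_ofReal_mul]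
    simp [hp0.ne']
  have lim2 : Tendsto (fun ε : ℝ => (2 / p * (2 / p + I * ε : ℂ)) ^ (1 / 2 : ℂ)) (𝓝[>] 0)
      (𝓝 ((2 / p * (2 / p : ℂ)) ^ (1 / 2 : ℂ))) := by
    refine (hτ.const_mul (2 / p : ℂ)).cpow tendsto_const_nhds ?_
    left
    rw [hre, re_ofReal_mul, ofReal_re]
    positivity
  have hinv : Tendsto (fun ε : ℝ => ε⁻¹) (𝓝[>] 0) atTop := tendsto_inv_nhdsGT_zero
  have lim3 : Tendsto (fun ε : ℝ => jacobiTheta (I * (2 / p + I * ε) / (2 * p * ε))) (𝓝[>] 0) (𝓝 1) := by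
    refine tendsto_theta_one ?_
    have := hinv.const_mul_atTop (r := 1 / (p : ℝ) ^ 2) (by positivity)
    refine this.congr' ?_
    filter_upwards [self_mem_nhdsWithin] with ε hε
    have hε' : (ε : ℂ) ≠ 0 := by exact_mod_cast (ne_of_gt hε)
    have : (I * (2 / p + I * ε) / (2 * p * ε) : ℂ) = ((1 / (p : ℝ) ^ 2 * ε⁻¹ : ℝ) : ℂ) * I + ((-1 / (2 * p) : ℝ) : ℂ) := by
      push_cast; field_simp; ring_nf; simp only [I_sq]; ring
    rw [this]
    simp only [add_im, ofReal_im, im_ofReal_mul, I_im, mul_one, add_zero]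
  have lim4 : Tendsto (fun ε : ℝ => jacobiTheta (2 * I * (2 / p + I * ε) / (p * ε))) (𝓝[>] 0) (𝓝 1) := by
    refine tendsto_theta_one ?_
    have := hinv.const_mul_atTop (r := 4 / (p : ℝ) ^ 2) (by positivity)
    refine this.congr' ?_
    filter_upwards [self_mem_nhdsWithin] with ε hε
    have hε' : (ε : ℂ) ≠ 0 := by exact_mod_cast (ne_of_gt hε)
    have : (2 * I * (2 / p + I * ε) / (p * ε) : ℂ) = ((4 / (p : ℝ) ^ 2 * ε⁻¹ : ℝ) : ℂ) * I + ((-2 / p : ℝ) : ℂ) := by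
      push_cast; field_simp; ring_nf; simp only [I_sq]; ring
    rw [this]
    simp only [add_im, ofReal_im, im_ofReal_mul, I_im, mul_one, add_zero]
  have L := (tendsto_theta p).mul lim1
  have R := lim2.mul ((lim3.const_mul ((1 - I) / 2)).add (lim4.const_mul I))
  have LR := tendsto_nhds_unique (L.congr' (by
    filter_upwards [self_mem_nhdsWithin] with ε hε
    exact key ε hε)) R
  -- evaluate the square roots
  have hsq : Real.sqrt p ^ 2 = p := Real.sq_sqrt hp0.le
  have hsp : (0 : ℝ) < Real.sqrt p := Real.sqrt_pos.mpr hp0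
  have v2 : (2 / p * (2 / p : ℂ)) ^ (1 / 2 : ℂ) = 2 / p := by
    have : (2 / p * (2 / p : ℂ)) = (2 / p : ℂ) ^ (2 : ℕ) := by ring
    rw [this, hre, show (1 / 2 : ℂ) = ((1 / 2 : ℝ) : ℂ) by push_cast; rfl, ← ofReal_pow,
      ← ofReal_cpow (by positivity), ← Real.sqrt_eq_rpow, Real.sqrt_sq (by positivity)]
  have v1 : (-I * (2 / p : ℂ)) ^ (1 / 2 : ℂ) = (1 - I) / Real.sqrt p := by
    have hs : (Real.sqrt p : ℂ) ^ 2 = p := by exact_mod_cast hsq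
    have hs0 : (Real.sqrt p : ℂ) ≠ 0 := by exact_mod_cast hsp.ne'
    have : (-I * (2 / p : ℂ)) = ((1 - I) / Real.sqrt p) ^ (2 : ℕ) := by
      rw [div_pow, hs]; field_simp; ring_nf; simp only [I_sq]; ring
    rw [this]
    have h2 : (1 / 2 : ℂ) = ((2 : ℕ) : ℂ)⁻¹ := by norm_num
    rw [h2]
    have harg : |((1 - I) / Real.sqrt p).arg| < π / 2 := by
      rw [abs_arg_lt_pi_div_two_iff]
      left
      rw [div_ofReal_re]
      simpa using hsp
    rw [abs_lt] at harg
    refine Complex.pow_cpow_nat_inv two_ne_zero ?_ ?_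
    · push_cast; exact harg.1
    · push_cast; exact harg.2.le
  rw [v1, v2] at LR
  have hs : (Real.sqrt p : ℂ) ^ 2 = p := by exact_mod_cast hsq
  have hs0 : (Real.sqrt p : ℂ) ≠ 0 := by exact_mod_cast hsp.ne'
  have h1I : (1 - I : ℂ) ≠ 0 := by
    intro h
    have := congrArg Complex.re h
    simp at this
  field_simp at LR
  have h3 : (1 - I) * (G p - I * Real.sqrt p) = 0 := by
    linear_combination LR + (Real.sqrt p : ℂ) * I_sq
  rcases mul_eq_zero.mp h3 with h | h
  · exact absurd h h1I
  · exact sub_eq_zero.mp h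

end gauss
end CNF

namespace CNF
section abel
open Complex Filter Topology MeasureTheory Finset

lemma deriv_inv_ofReal (t : ℝ) (ht : t ≠ 0) :
    HasDerivAt (fun t : ℝ => ((t⁻¹ : ℝ) : ℂ)) ((-(t ^ 2)⁻¹ : ℝ) : ℂ) t :=
  (hasDerivAt_inv ht).ofReal_comp

lemma sum_Icc_zero (c : ℕ → ℂ) (hc : c 0 = 0) (n : ℕ) :
    ∑ k ∈ Icc 0 n, c k = ∑ k ∈ Icc 1 n, c k := by
  rw [Finset.Icc_eq_cons_Ioc (Nat.zero_le _), sum_cons, hc, zero_add, ← Finset.Icc_add_one_left_eq_Ioc, Nat.zero_add]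

lemma integrable_sq : IntegrableOn (fun t : ℝ => t ^ (-2 : ℝ)) (Set.Ioi 1) :=
  integrableOn_Ioi_rpow_of_lt (by norm_num) one_pos

lemma partial_tendsto (c : ℕ → ℂ) (hc : c 0 = 0) (C : ℝ)
    (hC : ∀ n, ‖∑ k ∈ Icc 1 n, c k‖ ≤ C) :
    Tendsto (fun n : ℕ => ∑ k ∈ range n, c k / k) atTop
      (𝓝 (∫ t in Set.Ioi (1 : ℝ), (∑ k ∈ Icc 1 ⌊t⌋₊, c k) * ((t ^ (-2 : ℝ) : ℝ) : ℂ))) := by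
  have hd : ∀ t : ℝ, t ∈ Set.Ici (1 : ℝ) → deriv (fun t : ℝ => ((t⁻¹ : ℝ) : ℂ)) t = ((-(t ^ 2)⁻¹ : ℝ) : ℂ) :=
    fun t ht => (deriv_inv_ofReal t (by have : (1 : ℝ) ≤ t := ht; positivity)).deriv
  have hintg : LocallyIntegrableOn (deriv (fun t : ℝ => ((t⁻¹ : ℝ) : ℂ))) (Set.Ici 1) := by
    have hcont : ContinuousOn (fun t : ℝ => ((-(t ^ 2)⁻¹ : ℝ) : ℂ)) (Set.Ici 1) := by
      refine continuous_ofReal.comp_continuousOn ?_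
      refine ContinuousOn.neg (ContinuousOn.inv₀ (by fun_prop) fun t ht => ?_)
      have : (1 : ℝ) ≤ t := ht
      positivity
    exact (hcont.congr hd).locallyIntegrableOn measurableSet_Ici
  have hC0 : 0 ≤ C := (norm_nonneg _).trans (hC 0)
  have h := tendsto_sum_mul_atTop_nhds_one_sub_integral₀ c (f := fun t : ℝ => ((t⁻¹ : ℝ) : ℂ)) hc
    (fun t ht => (deriv_inv_ofReal t (by have : (1 : ℝ) ≤ t := ht; positivity)).differentiableAt)
    hintg (l := 0) (g := fun t : ℝ => t ^ (-2 : ℝ)) ?_ ?_ ?_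
  · rw [zero_sub, ← integral_neg] at h
    have e : (∫ t in Set.Ioi (1 : ℝ), -(deriv (fun t : ℝ => ((t⁻¹ : ℝ) : ℂ)) t * ∑ k ∈ Icc 0 ⌊t⌋₊, c k)) =
      ∫ t in Set.Ioi (1 : ℝ), (∑ k ∈ Icc 1 ⌊t⌋₊, c k) * ((t ^ (-2 : ℝ) : ℝ) : ℂ) := by
      refine setIntegral_congr_fun measurableSet_Ioi fun t ht => ?_
      have ht : 1 < t := ht
      rw [hd t (Set.mem_Ici.mpr ht.le), sum_Icc_zero c hc, Real.rpow_neg (by linarith), Real.rpow_ofNat]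
      push_cast
      ring
    rw [e] at h
    rw [← tendsto_add_atTop_iff_nat 1]
    refine h.congr fun n => ?_
    rw [Finset.range_eq_Ico, Finset.Ico_add_one_right_eq_Icc]
    refine sum_congr rfl fun k _ => ?_
    push_cast
    ring
  · refine squeeze_zero_norm (a := fun n : ℕ => (n : ℝ)⁻¹ * C) (fun n => ?_) ?_
    · rw [norm_mul, sum_Icc_zero c hc, norm_real, Real.norm_of_nonneg (by positivity)]
      gcongr
      exact hC n
    · simpa using (tendsto_inv_atTop_nhds_zero_nat (𝕜 := ℝ)).mul_const C
  · refine Asymptotics.IsBigO.of_bound C ?_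
    filter_upwards [eventually_ge_atTop (1 : ℝ)] with t ht
    rw [hd t ht, norm_mul, sum_Icc_zero c hc, mul_comm, norm_real, norm_neg,
      Real.norm_of_nonneg (by positivity), Real.norm_of_nonneg (by positivity),
      Real.rpow_neg (by linarith), Real.rpow_ofNat]
    gcongr
    exact hC _
  · exact ⟨Set.Ioi 1, Ioi_mem_atTop 1, integrable_sq⟩

lemma lseries_tendsto (c : ℕ → ℂ) (hc : c 0 = 0) (C : ℝ) (hb : ∀ n, ‖c n‖ ≤ 1)
    (hC : ∀ n, ‖∑ k ∈ Icc 1 n, c k‖ ≤ C) :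
    Tendsto (fun s : ℝ => LSeries c s) (𝓝[>] 1)
      (𝓝 (∫ t in Set.Ioi (1 : ℝ), (∑ k ∈ Icc 1 ⌊t⌋₊, c k) * ((t ^ (-2 : ℝ) : ℝ) : ℂ))) := by
  have hC0 : 0 ≤ C := (norm_nonneg _).trans (hC 0)
  have h1 : Tendsto (fun s : ℝ => ∫ t in Set.Ioi (1 : ℝ), (∑ k ∈ Icc 1 ⌊t⌋₊, c k) * ((t ^ (-(s + 1)) : ℝ) : ℂ))
      (𝓝[>] 1) (𝓝 (∫ t in Set.Ioi (1 : ℝ), (∑ k ∈ Icc 1 ⌊t⌋₊, c k) * ((t ^ (-2 : ℝ) : ℝ) : ℂ))) := by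
    refine tendsto_integral_filter_of_dominated_convergence (fun t => C * t ^ (-2 : ℝ)) ?_ ?_ ?_ ?_
    · refine Eventually.of_forall fun s => ?_
      refine AEStronglyMeasurable.mul ?_ ?_
      · refine Measurable.aestronglyMeasurable ?_
        exact (measurable_from_nat (f := fun n => ∑ k ∈ Icc 1 n, c k)).comp Nat.measurable_floor
      · exact (Complex.measurable_ofReal.comp (by fun_prop)).aestronglyMeasurable
    · filter_upwards [self_mem_nhdsWithin] with s hs
      have hs : 1 < s := hs
      refine (ae_restrict_iff' measurableSet_Ioi).mpr (Eventually.of_forall fun t ht => ?_)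
      have ht : 1 < t := ht
      rw [norm_mul, norm_real, Real.norm_of_nonneg (by positivity)]
      gcongr
      · exact hC _
      · exact ht.le
      · linarith
    · exact integrable_sq.const_mul C
    · refine (ae_restrict_iff' measurableSet_Ioi).mpr (Eventually.of_forall fun t ht => ?_)
      have ht : 1 < t := ht
      refine Tendsto.const_mul _ ?_
      refine (continuous_ofReal.tendsto _).comp ?_
      have : Continuous (fun s : ℝ => t ^ (-(s + 1))) :=
        Real.continuous_const_rpow (by linarith : t ≠ 0) |>.comp (by fun_prop)
      exact (this.tendsto' 1 _ (by norm_num)).mono_left nhdsWithin_le_nhds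
  have h2 : Tendsto (fun s : ℝ => (s : ℂ)) (𝓝[>] 1) (𝓝 1) :=
    (continuous_ofReal.tendsto' 1 1 (by simp)).mono_left nhdsWithin_le_nhds
  have h3 := h2.mul h1
  rw [one_mul] at h3
  refine h3.congr' ?_
  filter_upwards [self_mem_nhdsWithin] with s hs
  have hs : 1 < s := hs
  rw [LSeries_eq_mul_integral c le_rfl (by simp; linarith)
    (LSeriesSummable_of_bounded_of_one_lt_re (fun n _ => hb n) (by simpa)) ?_]
  · congr 1
    refine setIntegral_congr_fun measurableSet_Ioi fun t ht => ?_
    have ht : 1 < t := ht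
    rw [ofReal_cpow (by linarith)]
    push_cast
    rfl
  · refine Asymptotics.IsBigO.of_bound C (Eventually.of_forall fun n => ?_)
    simpa using hC n

end abel
end CNF

namespace CNF
section value
open Complex Filter Topology Finset
open scoped Real

variable (p : ℕ) [Fact p.Prime]

/-- the quadratic character with complex values -/
noncomputable def chi : MulChar (ZMod p) ℂ := (quadraticChar (ZMod p)).ringHomComp (Int.castRingHom ℂ)

lemma chi_nat (n : ℕ) : chi p (n : ZMod p) = (legendreSym p n : ℂ) := by
  simp [chi, legendreSym]

lemma sum_zmod (f : ZMod p → ℂ) : ∑ x, f x = ∑ r ∈ range p, f (r : ZMod p) := by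
  symm
  refine Finset.sum_nbij' (fun r => (r : ZMod p)) (fun x => x.val) ?_ ?_ ?_ ?_ ?_
  · simp
  · intro x _; simpa using ZMod.val_lt x
  · intro r hr; exact ZMod.val_natCast_of_lt (by simpa using hr)
  · intro x _; simp
  · simp

lemma psi_nat (n : ℕ) : ZMod.stdAddChar (n : ZMod p) = cexp (2 * π * I * n / p) := by
  have := ZMod.stdAddChar_coe (N := p) (n : ℤ)
  simpa using this

lemma chi_ne_one (hp2 : p ≠ 2) : chi p ≠ 1 := by
  have h := quadraticChar_ne_one (F := ZMod p) (by rwa [ZMod.ringChar_zmod_n])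
  intro h1
  apply h
  ext a
  have := congrArg (fun χ : MulChar (ZMod p) ℂ => χ a) h1
  simp only [chi, MulChar.ringHomComp_apply, MulChar.one_apply_coe, eq_intCast] at this
  rw [MulChar.one_apply_coe]
  exact_mod_cast this

lemma gauss_eq (hp2 : p ≠ 2) : gaussSum (chi p) ZMod.stdAddChar = G p := by
  have h0 : ∑ a : ZMod p, (ZMod.stdAddChar a : ℂ) = 0 := by
    apply AddChar.sum_eq_zero_of_ne_one
    have h := ZMod.isPrimitive_stdAddChar p (one_ne_zero)
    intro h1
    apply h
    ext a; simp [h1]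
  have h1 : G p = ∑ x : ZMod p, (ZMod.stdAddChar (x ^ 2) : ℂ) := by
    rw [sum_zmod, G, ← Fin.sum_univ_eq_sum_range (fun r => (ZMod.stdAddChar ((r : ZMod p) ^ 2) : ℂ))]
    refine sum_congr rfl fun r _ => ?_
    have h5 := psi_nat p ((r : ℕ) ^ 2)
    push_cast at h5
    rw [h5]
  have h2 : ∑ x : ZMod p, (ZMod.stdAddChar (x ^ 2) : ℂ) =
      ∑ a : ZMod p, (chi p a + 1) * ZMod.stdAddChar a := by
    rw [← Finset.sum_fiberwise univ (fun x : ZMod p => x ^ 2)]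
    refine sum_congr rfl fun a _ => ?_
    have hc := quadraticChar_card_sqrts (F := ZMod p) (by rwa [ZMod.ringChar_zmod_n]) a
    have : ((#{x : ZMod p | x ^ 2 = a} : ℕ) : ℂ) = chi p a + 1 := by
      have h3 : ((#{x : ZMod p | x ^ 2 = a} : ℕ) : ℤ) = quadraticChar (ZMod p) a + 1 := by
        rw [← hc]; congr 2; ext x; simp
      have h4 := congrArg (fun z : ℤ => (z : ℂ)) h3
      simpa [chi] using h4
    rw [← this, ← nsmul_eq_mul, ← sum_const]
    refine sum_congr rfl fun x hx => ?_
    rw [(mem_filter.mp hx).2]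
  rw [h1, h2, gaussSum]
  simp only [add_mul, one_mul, sum_add_distrib, h0, add_zero]

lemma chi_real (a : ZMod p) : (chi p)⁻¹ a = chi p a := by
  have h : (chi p).IsQuadratic := (quadraticChar_isQuadratic (ZMod p)).comp _
  rw [h.inv]

lemma twist (hp2 : p ≠ 2) (n : ℕ) :
    chi p n * G p = ∑ a : ZMod p, chi p a * (ZMod.stdAddChar a : ℂ) ^ n := by
  have e : ∑ a : ZMod p, chi p a * (ZMod.stdAddChar a : ℂ) ^ n =
      gaussSum (chi p) (ZMod.stdAddChar.mulShift (n : ZMod p)) := by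
    refine sum_congr rfl fun a _ => ?_
    rw [AddChar.mulShift_apply, ← AddChar.map_nsmul_eq_pow, nsmul_eq_mul]
  rw [e]
  by_cases h : (n : ZMod p) = 0
  · rw [h, AddChar.mulShift_zero, gaussSum_one_right (chi_ne_one p hp2), MulChar.map_zero, zero_mul]
  · have := gaussSum_mulShift_eq (chi p) ZMod.stdAddChar (Units.mk0 (n : ZMod p) h)
    rw [Units.val_mk0, chi_real, gauss_eq p hp2] at this
    exact this.symm

lemma log_val (a : ℕ) (ha : 0 < a) (hap : a < p) :
    1 - cexp (2 * π * I * a / p) ∈ slitPlane ∧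
    Complex.log (1 - cexp (2 * π * I * a / p)) =
      Real.log (2 * Real.sin (π * a / p)) + I * π / p * a - I * π / 2 := by
  have hp0 : (0 : ℝ) < p := by exact_mod_cast (ha.trans hap)
  have hp : (p : ℂ) ≠ 0 := by exact_mod_cast hp0.ne'
  have ha0 : (0 : ℝ) < a := by exact_mod_cast ha
  have hap' : (a : ℝ) < p := by exact_mod_cast hap
  have hs : 0 < 2 * Real.sin (π * a / p) := by
    have : 0 < Real.sin (π * a / p) := by
      apply Real.sin_pos_of_pos_of_lt_pi
      · have := Real.pi_pos; positivity
      · rw [div_lt_iff₀ hp0]; have := Real.pi_pos; nlinarith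
    linarith
  have hs' : ((2 * Real.sin (π * a / p) : ℝ) : ℂ) ≠ 0 := by exact_mod_cast hs.ne'
  have e : 1 - cexp (2 * π * I * a / p) =
      cexp (Real.log (2 * Real.sin (π * a / p)) + I * π / p * a - I * π / 2) := by
    have h1 : cexp (Real.log (2 * Real.sin (π * a / p))) = ((2 * Real.sin (π * a / p) : ℝ) : ℂ) := by
      rw [← ofReal_exp, Real.exp_log hs]
    have h2 : cexp (-(I * π / 2)) = -I := by
      rw [show -(I * π / 2) = -(π / 2 * I) by ring, Complex.exp_neg, Complex.exp_pi_div_two_mul_I, inv_I]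
    rw [sub_eq_add_neg (_ + _), Complex.exp_add, Complex.exp_add, h1, h2]
    push_cast
    rw [Complex.sin]
    have h3 : cexp (2 * π * I * a / p) = cexp (I * π / p * a) * cexp (I * π / p * a) := by
      rw [← Complex.exp_add]; congr 1; ring
    have h4 : cexp (I * π / p * a) * cexp (-(π * a / p) * I) = 1 := by
      rw [← Complex.exp_add, show I * π / p * a + -(π * a / p) * I = 0 by ring, Complex.exp_zero]
    have h5 : cexp (π * a / p * I) = cexp (I * π / p * a) := by congr 1; ring
    rw [h3, h5]
    linear_combination (-1 : ℂ) * h4 + (cexp (I * π / p * a) * (cexp (-(π * a / p) * I) - cexp (I * π / p * a))) * I_sq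
  have him : (Real.log (2 * Real.sin (π * a / p)) + I * π / p * a - I * π / 2 : ℂ).im = π * (a / p - 1 / 2) := by
    have : (Real.log (2 * Real.sin (π * a / p)) + I * π / p * a - I * π / 2 : ℂ) =
      ((Real.log (2 * Real.sin (π * a / p)) : ℝ) : ℂ) + ((π * (a / p - 1 / 2) : ℝ) : ℂ) * I := by
      push_cast; ring
    rw [this, add_im, ofReal_im, im_ofReal_mul, I_im]; ring
  have q1 : 0 < (a : ℝ) / p := by positivity
  have q2 : (a : ℝ) / p < 1 := (div_lt_one hp0).mpr hap'
  have hlog : Complex.log (1 - cexp (2 * π * I * a / p)) =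
      Real.log (2 * Real.sin (π * a / p)) + I * π / p * a - I * π / 2 := by
    rw [e, Complex.log_exp]
    · rw [him]; nlinarith [Real.pi_pos]
    · rw [him]; nlinarith [Real.pi_pos]
  refine ⟨?_, hlog⟩
  rw [mem_slitPlane_iff_arg]
  constructor
  · rw [← Complex.log_im, hlog, him]
    nlinarith [Real.pi_pos]
  · rw [e]; exact Complex.exp_ne_zero _

lemma chi_sum_bound (hp2 : p ≠ 2) (n : ℕ) :
    ‖∑ k ∈ Icc 1 n, (legendreSym p k : ℂ)‖ ≤ p := by
  have hb : ∀ n : ℕ, ‖(legendreSym p n : ℂ)‖ ≤ 1 := by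
    intro n
    rcases (quadraticChar_isQuadratic (ZMod p)) ((n : ℤ) : ZMod p) with h0 | h0 | h0 <;>
      change legendreSym p n = _ at h0 <;> rw [h0] <;> simp
  have h0 : (legendreSym p (0 : ℕ) : ℂ) = 0 := by simp
  rw [← sum_Icc_zero (fun k => (legendreSym p k : ℂ)) h0 n, ← Finset.Ico_add_one_right_eq_Icc, ← range_eq_Ico]
  have hper : Function.Periodic (fun n => ∑ k ∈ range n, (legendreSym p k : ℂ)) p := by
    intro m
    simp only
    rw [add_comm, sum_range_add]
    have : ∑ k ∈ range p, (legendreSym p k : ℂ) = 0 := by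
      have := MulChar.sum_eq_zero_of_ne_one (chi_ne_one p hp2)
      rw [sum_zmod] at this
      simpa [chi_nat] using this
    rw [this, zero_add]
    refine sum_congr rfl fun k _ => ?_
    rw [← chi_nat, ← chi_nat]; simp
  have h1 := hper.map_mod_nat (n + 1)
  beta_reduce at h1
  rw [← h1]
  refine (norm_sum_le _ _).trans ?_
  refine (sum_le_sum fun k _ => hb k).trans ?_
  simp only [sum_const, card_range, nsmul_eq_mul, mul_one]
  exact_mod_cast (Nat.mod_lt _ (Fact.out : p.Prime).pos).le

/-- the sum of `χ(n)/n` -/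
lemma value (hp4 : p % 4 = 3) {l : ℂ}
    (hl : Tendsto (fun n : ℕ => ∑ k ∈ range n, (legendreSym p k : ℂ) / k) atTop (𝓝 l)) :
    G p * l = -(I * π / p) * ((∑ a ∈ range (p - 1), ((a : ℤ) + 1) * legendreSym p (a + 1) : ℤ) : ℂ) := by
  have hp2 : p ≠ 2 := by omega
  have hpp : p.Prime := Fact.out
  have hp1 : p = (p - 1) + 1 := by have := hpp.pos; omega
  have hA := Complex.tendsto_tsum_powerSeries_nhdsWithin_lt hl
  rw [tendsto_map'_iff] at hA
  have hA' := hA.const_mul (G p)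
  have hnorm : ∀ a : ZMod p, ‖(ZMod.stdAddChar a : ℂ)‖ = 1 := fun a => by
    rw [ZMod.stdAddChar_apply]; exact Circle.norm_coe _
  have key : ∀ x : ℝ, 0 < x → x < 1 →
      G p * ∑' n : ℕ, (legendreSym p n : ℂ) / n * (x : ℂ) ^ n =
      ∑ a ∈ range (p - 1), chi p ((a + 1 : ℕ) : ZMod p) *
        -Complex.log (1 - ZMod.stdAddChar ((a + 1 : ℕ) : ZMod p) * x) := by
    intro x hx0 hx1
    have h1 : ∀ a : ZMod p, HasSum (fun n : ℕ => chi p a * ((ZMod.stdAddChar a * x : ℂ) ^ n / n))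
        (chi p a * -Complex.log (1 - ZMod.stdAddChar a * x)) := by
      intro a
      refine (Complex.hasSum_taylorSeries_neg_log ?_).mul_left _
      rw [norm_mul, hnorm, one_mul, norm_real, Real.norm_of_nonneg hx0.le]; exact hx1
    have h2 := hasSum_sum (s := univ) (fun a _ => h1 a)
    have h3 : ∀ n : ℕ, ∑ a : ZMod p, chi p a * ((ZMod.stdAddChar a * x : ℂ) ^ n / n) =
        G p * ((legendreSym p n : ℂ) / n * (x : ℂ) ^ n) := by
      intro n
      rw [← chi_nat, show G p * (chi p n / n * (x : ℂ) ^ n) = (chi p n * G p) * ((x : ℂ) ^ n / n) by ring,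
        twist p hp2, sum_mul]
      refine sum_congr rfl fun a _ => ?_
      rw [mul_pow]; ring
    simp only [h3] at h2
    rw [← tsum_mul_left, h2.tsum_eq, sum_zmod,
      show range p = range ((p - 1) + 1) by rw [← hp1], sum_range_succ',
      Nat.cast_zero, MulChar.map_zero, zero_mul, add_zero]
  have hB : Tendsto (fun x : ℝ => ∑ a ∈ range (p - 1), chi p ((a + 1 : ℕ) : ZMod p) *
        -Complex.log (1 - ZMod.stdAddChar ((a + 1 : ℕ) : ZMod p) * x)) (𝓝[<] 1)
      (𝓝 (∑ a ∈ range (p - 1), chi p ((a + 1 : ℕ) : ZMod p) *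
        -(Real.log (2 * Real.sin (π * (a + 1 : ℕ) / p)) + I * π / p * (a + 1 : ℕ) - I * π / 2))) := by
    refine tendsto_finsetSum _ fun a ha => ?_
    rw [mem_range] at ha
    obtain ⟨h1, h2⟩ := log_val p (a + 1) (by omega) (by omega)
    rw [← h2]
    rw [← psi_nat] at h1 ⊢
    refine Tendsto.const_mul _ (Tendsto.neg ?_)
    have hc : ContinuousAt (fun x : ℝ => Complex.log (1 - ZMod.stdAddChar ((a + 1 : ℕ) : ZMod p) * x)) 1 := by
      refine ContinuousAt.clog (by fun_prop) ?_
      simpa using h1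
    have := hc.tendsto
    simp only [ofReal_one, mul_one] at this
    exact this.mono_left nhdsWithin_le_nhds
  have hlim := tendsto_nhds_unique (hA'.congr' (by
    filter_upwards [self_mem_nhdsWithin, Ioo_mem_nhdsLT (zero_lt_one (α := ℝ))] with x hx hx'
    exact key x hx'.1 hx'.2)) hB
  rw [hlim]
  -- the logarithms cancel
  have hneg : legendreSym p (-1) = -1 := by
    rw [legendreSym.at_neg_one hp2, ZMod.χ₄_nat_three_mod_four hp4]
  have hodd : ∀ x : ZMod p, chi p (-x) = - chi p x := by
    intro x
    have : chi p (-1) = -1 := by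
      have h : chi p (-1) = (legendreSym p (-1) : ℂ) := by simp [chi, legendreSym]
      rw [h, hneg]; simp
    rw [← neg_one_mul, map_mul, this]; ring
  have hz : ∑ a ∈ range (p - 1), chi p ((a + 1 : ℕ) : ZMod p) *
      ((Real.log (2 * Real.sin (π * (a + 1 : ℕ) / p)) : ℂ) - I * π / 2) = 0 := by
    have h := sum_range_reflect (fun a => chi p ((a + 1 : ℕ) : ZMod p) *
      ((Real.log (2 * Real.sin (π * (a + 1 : ℕ) / p)) : ℂ) - I * π / 2)) (p - 1)
    have h' : ∑ a ∈ range (p - 1), chi p ((p - 1 - 1 - a + 1 : ℕ) : ZMod p) *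
        ((Real.log (2 * Real.sin (π * (p - 1 - 1 - a + 1 : ℕ) / p)) : ℂ) - I * π / 2) =
        - ∑ a ∈ range (p - 1), chi p ((a + 1 : ℕ) : ZMod p) *
        ((Real.log (2 * Real.sin (π * (a + 1 : ℕ) / p)) : ℂ) - I * π / 2) := by
      rw [← sum_neg_distrib]
      refine sum_congr rfl fun a ha => ?_
      rw [mem_range] at ha
      have e : p - 1 - 1 - a + 1 = p - (a + 1) := by omega
      rw [e, Nat.cast_sub (by omega), Nat.cast_sub (by omega), ZMod.natCast_self, zero_sub, hodd]
      have hp0 : (p : ℝ) ≠ 0 := by exact_mod_cast hpp.ne_zero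
      rw [show π * ((p : ℝ) - (a + 1 : ℕ)) / p = π - π * (a + 1 : ℕ) / p by field_simp, Real.sin_pi_sub]
      ring
    rw [h'] at h
    have : (2 : ℂ) * ∑ a ∈ range (p - 1), chi p ((a + 1 : ℕ) : ZMod p) *
      ((Real.log (2 * Real.sin (π * (a + 1 : ℕ) / p)) : ℂ) - I * π / 2) = 0 := by linear_combination -h
    simpa using this
  have e : ∑ a ∈ range (p - 1), chi p ((a + 1 : ℕ) : ZMod p) *
        -(Real.log (2 * Real.sin (π * (a + 1 : ℕ) / p)) + I * π / p * (a + 1 : ℕ) - I * π / 2) =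
      -(I * π / p) * ∑ a ∈ range (p - 1), ((a + 1 : ℕ) : ℂ) * chi p ((a + 1 : ℕ) : ZMod p) -
       ∑ a ∈ range (p - 1), chi p ((a + 1 : ℕ) : ZMod p) *
      ((Real.log (2 * Real.sin (π * (a + 1 : ℕ) / p)) : ℂ) - I * π / 2) := by
    rw [mul_sum, ← sum_sub_distrib]
    refine sum_congr rfl fun a _ => ?_
    ring
  rw [e, hz, sub_zero]
  congr 1
  push_cast
  refine sum_congr rfl fun a _ => ?_
  have := chi_nat p (a + 1)
  push_cast at this
  rw [this]

end value
end CNF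

/-- **Dirichlet's class number formula for the half-interval character sum.**
For a prime `p ≡ 3 (mod 4)`, `p ≠ 3`, and any number field `K = ℚ(√-p)`
(i.e. generated over `ℚ` by an element `s` with `s ^ 2 = -p`), the sum of
Legendre symbols `∑_{n=1}^{(p-1)/2} (n/p)` equals `(2 - (2/p)) · h(-p)`. -/
theorem stmt_0 (p : ℕ) [Fact p.Prime] (hp4 : p % 4 = 3) (hp3 : p ≠ 3)
    (K : Type*) [Field K] [NumberField K] (s : K)
    (hs : s ^ 2 = -(p : K)) (hgen : IntermediateField.adjoin ℚ {s} = ⊤) :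
    ∑ n ∈ Finset.Icc 1 ((p - 1) / 2), legendreSym p (n : ℤ) =
      (2 - legendreSym p 2) * (NumberField.classNumber K : ℤ) := by
  have hp2 : p ≠ 2 := by omega
  have hpp : p.Prime := Fact.out
  haveI : NeZero p := ⟨hpp.ne_zero⟩
  have hb : ∀ n : ℕ, ‖(legendreSym p n : ℂ)‖ ≤ 1 := by
    intro n
    rcases (quadraticChar_isQuadratic (ZMod p)) ((n : ℤ) : ZMod p) with h0 | h0 | h0 <;>
      change legendreSym p n = _ at h0 <;> rw [h0] <;> simp
  have h0 : (legendreSym p (0 : ℕ) : ℂ) = 0 := by simp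
  have h1 := CNF.partial_tendsto (fun n => (legendreSym p n : ℂ)) h0 p (CNF.chi_sum_bound p hp2)
  have h2 := CNF.lseries_tendsto (fun n => (legendreSym p n : ℂ)) h0 p hb (CNF.chi_sum_bound p hp2)
  have h3 := tendsto_nhds_unique h2 (CNF.tendsto_L hp4 hp3 hs hgen)
  rw [h3] at h1
  have h4 := CNF.value p hp4 h1
  rw [CNF.G_eq p hp4] at h4
  apply CNF.elem_final p hp4
  have hsq : (0 : ℝ) < Real.sqrt p := Real.sqrt_pos.mpr (by exact_mod_cast hpp.pos)
  have hsq' : ((Real.sqrt p : ℝ) : ℂ) ≠ 0 := by exact_mod_cast hsq.ne'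
  have hp0 : (p : ℂ) ≠ 0 := by exact_mod_cast hpp.ne_zero
  have hpi : ((Real.pi : ℝ) : ℂ) ≠ 0 := by exact_mod_cast Real.pi_ne_zero
  have key : (p : ℂ) * (NumberField.classNumber K : ℂ) =
      -((∑ a ∈ Finset.range (p - 1), ((a : ℤ) + 1) * legendreSym p (a + 1) : ℤ) : ℂ) := by
    generalize ((∑ a ∈ Finset.range (p - 1), ((a : ℤ) + 1) * legendreSym p (a + 1) : ℤ) : ℂ) = S at h4 ⊢
    rw [Complex.ofReal_div, Complex.ofReal_mul, Complex.ofReal_natCast] at h4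
    have e1 : Complex.I * (Real.sqrt p : ℂ) *
        ((Real.pi : ℂ) * (NumberField.classNumber K : ℂ) / (Real.sqrt p : ℂ)) =
        (Complex.I * Real.pi / p) * (p * (NumberField.classNumber K : ℂ)) := by
      field_simp
    rw [e1, neg_mul, ← mul_neg] at h4
    exact mul_left_cancel₀ (div_ne_zero (mul_ne_zero Complex.I_ne_zero hpi) hp0) h4
  exact_mod_cast key
end

section
/- Let α be a real number with 0 < α < 1 and let p be an odd prime such that αp is not an integer. Then the symmetric partial sums Σ_{0<|m|≤M} ((1 − e^{−2πiαm})/(2πim)) · (m/p) converge as M → ∞, and L(α,p) = τ(χ_p) · lim_{M→∞} Σ_{0<|m|≤M} ((1 − e^{−2πiαm})/(2πim)) · (m/p), where the equality is of complex numbers. -/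
open Filter

noncomputable def ee (x : ℝ) (m : ℤ) : ℂ := Complex.exp (2 * Real.pi * Complex.I * (x : ℂ) * (m : ℂ))

noncomputable def SS (x : ℝ) (M : ℕ) : ℂ :=
  ∑ m ∈ (Finset.Icc (-(M : ℤ)) (M : ℤ)).erase 0, ee x m / (2 * Real.pi * Complex.I * (m : ℂ))

lemma sum_symm (g : ℤ → ℂ) (M : ℕ) :
    ∑ m ∈ (Finset.Icc (-(M : ℤ)) (M : ℤ)).erase 0, g m =
      ∑ k ∈ Finset.range M, (g (k + 1) + g (-(k + 1))) := by
  induction M with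
  | zero => simp
  | succ n ih =>
    rw [Finset.sum_range_succ, ← ih]
    have : (Finset.Icc (-((n + 1 : ℕ) : ℤ)) ((n + 1 : ℕ) : ℤ)).erase 0 =
        insert ((n : ℤ) + 1) (insert (-((n : ℤ) + 1)) ((Finset.Icc (-(n : ℤ)) (n : ℤ)).erase 0)) := by
      ext x
      simp only [Finset.mem_erase, Finset.mem_Icc, Finset.mem_insert]
      push_cast
      omega
    rw [this, Finset.sum_insert, Finset.sum_insert]
    · ring
    · simp
    · simp only [Finset.mem_insert, Finset.mem_erase, Finset.mem_Icc]
      omega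

lemma dirichlet_log (z : ℂ) (hz : ‖z‖ = 1) (hre : z.re < 1) :
    Tendsto (fun n : ℕ => ∑ i ∈ Finset.range n, z ^ (i + 1) / ((i : ℂ) + 1)) atTop
      (nhds (-Complex.log (1 - z))) := by
  have hz1 : z ≠ 1 := by rintro rfl; simp at hre
  have hc : CauchySeq (fun n : ℕ => ∑ i ∈ Finset.range n, (1 / ((i : ℝ) + 1)) • z ^ (i + 1)) := by
    refine Antitone.cauchySeq_series_mul_of_tendsto_zero_of_bounded (b := 2 / ‖z - 1‖) ?_
      tendsto_one_div_add_atTop_nhds_zero_nat ?_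
    · intro a b hab
      dsimp only
      gcongr
    · intro n
      have : ∑ i ∈ Finset.range n, z ^ (i + 1) = z * ((z ^ n - 1) / (z - 1)) := by
        rw [← geom_sum_eq hz1, Finset.mul_sum]
        exact Finset.sum_congr rfl fun i _ => by ring
      rw [this, norm_mul, hz, one_mul, norm_div]
      gcongr
      refine (norm_sub_le _ _).trans ?_
      simp [hz]; norm_num
  obtain ⟨l, hl⟩ := cauchySeq_tendsto_of_complete hc
  have hl' : Tendsto (fun n : ℕ => ∑ i ∈ Finset.range n, z ^ (i + 1) / ((i : ℂ) + 1)) atTop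
      (nhds l) := by
    convert hl using 4 with n i
    rw [Complex.real_smul]; push_cast; ring
  have hab := Complex.tendsto_tsum_powerSeries_nhdsWithin_lt hl'
  rw [tendsto_map'_iff] at hab
  have hid : Tendsto (fun r : ℝ => (r : ℂ)) (nhdsWithin 1 (Set.Iio 1)) (nhds 1) := by
    have : Continuous (fun r : ℝ => (r : ℂ)) := Complex.continuous_ofReal
    simpa using (this.tendsto 1).mono_left nhdsWithin_le_nhds
  have h2 := hid.mul hab
  have h3 : Tendsto (fun r : ℝ => -Complex.log (1 - r * z)) (nhdsWithin 1 (Set.Iio 1))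
      (nhds (-Complex.log (1 - z))) := by
    refine Tendsto.neg (Tendsto.clog ?_ ?_)
    · simpa using (tendsto_const_nhds (x := (1 : ℂ))).sub (hid.mul_const z)
    · left; simpa using hre
  have h4 : l = -Complex.log (1 - z) := by
    have := tendsto_nhds_unique_of_eventuallyEq h2 h3 ?_
    · simpa using this
    · have h0 : ∀ᶠ r : ℝ in nhdsWithin 1 (Set.Iio 1), 0 < r :=
        (lt_mem_nhds one_pos).filter_mono nhdsWithin_le_nhds
      filter_upwards [h0, self_mem_nhdsWithin] with r hr hr1
      have hn : ‖(r : ℂ) * z‖ < 1 := by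
        rw [norm_mul, hz, mul_one, Complex.norm_real, Real.norm_of_nonneg hr.le]; exact hr1
      have hs := Complex.hasSum_taylorSeries_neg_log hn
      rw [← hasSum_nat_add_iff' 1] at hs
      have := hs.tsum_eq
      simp only [Finset.range_one, Finset.sum_singleton, pow_zero, Nat.cast_zero, div_zero,
        sub_zero] at this
      rw [← this]
      simp only [Function.comp]
      rw [← tsum_mul_left]
      refine tsum_congr fun i => ?_
      push_cast
      rw [mul_pow]; ring
  rw [← h4]; exact hl'

lemma arg_one_sub (x : ℝ) (h0 : 0 < x) (h1 : x < 1) :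
    (1 - Complex.exp (2 * Real.pi * Complex.I * (x : ℂ))).arg = Real.pi * x - Real.pi / 2 := by
  have hpi := Real.pi_pos
  have hs : 0 < 2 * Real.sin (Real.pi * x) :=
    mul_pos two_pos (Real.sin_pos_of_pos_of_lt_pi (by positivity) (by nlinarith))
  have : 1 - Complex.exp (2 * Real.pi * Complex.I * (x : ℂ)) =
      ((2 * Real.sin (Real.pi * x) : ℝ) : ℂ) * (Complex.cos ((Real.pi * x - Real.pi / 2 : ℝ) : ℂ) +
        Complex.sin ((Real.pi * x - Real.pi / 2 : ℝ) : ℂ) * Complex.I) := by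
    rw [← Complex.ofReal_cos, ← Complex.ofReal_sin, Real.cos_sub_pi_div_two,
      Real.sin_sub_pi_div_two]
    have : (2 * Real.pi * Complex.I * (x : ℂ)) = ((2 * (Real.pi * x) : ℝ) : ℂ) * Complex.I := by
      push_cast; ring
    rw [this, Complex.exp_mul_I, ← Complex.ofReal_cos, ← Complex.ofReal_sin, Real.cos_two_mul,
      Real.sin_two_mul]
    have h := Complex.ofReal_inj.2 (Real.sin_sq_add_cos_sq (Real.pi * x))
    push_cast at h ⊢
    linear_combination (-2) * h
  rw [this, Complex.arg_mul_cos_add_sin_mul_I hs]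
  constructor <;> nlinarith

lemma SS_tendsto (x : ℝ) (h0 : 0 < x) (h1 : x < 1) :
    Tendsto (SS x) atTop (nhds ((1 / 2 - x : ℝ) : ℂ)) := by
  set z := Complex.exp (2 * Real.pi * Complex.I * (x : ℂ)) with hzdef
  have hz' : z = Complex.exp (((2 * Real.pi * x : ℝ) : ℂ) * Complex.I) := by
    rw [hzdef]; push_cast; ring_nf
  have hz : ‖z‖ = 1 := by rw [hz', Complex.norm_exp_ofReal_mul_I]
  have hre : z.re < 1 := by
    rw [hz', Complex.exp_ofReal_mul_I_re]
    refine lt_of_le_of_ne (Real.cos_le_one _) fun h => ?_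
    rw [Real.cos_eq_one_iff] at h
    obtain ⟨n, hn⟩ := h
    have : (n : ℝ) = x := by
      have := Real.pi_pos
      field_simp at hn
      linarith
    have a : (0 : ℝ) < n := by rw [this]; exact h0
    have b : (n : ℝ) < 1 := by rw [this]; exact h1
    norm_cast at a b
    omega
  have h := (Complex.continuous_im.tendsto _).comp (dirichlet_log z hz hre)
  rw [Complex.neg_im, Complex.log_im, arg_one_sub x h0 h1] at h
  have h2 := (Complex.continuous_ofReal.tendsto _).comp (h.div_const Real.pi)
  have hpi := Real.pi_pos.ne'
  convert h2 using 1
  · funext M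
    simp only [SS, sum_symm, Function.comp, Complex.im_sum, Finset.sum_div, Complex.ofReal_sum]
    refine Finset.sum_congr rfl fun k _ => ?_
    have e1 : ee x (k + 1) = z ^ (k + 1) := by
      rw [ee, hzdef, ← Complex.exp_nat_mul]; push_cast; ring_nf
    have e2 : ee x (-(k + 1)) = (starRingEnd ℂ) (z ^ (k + 1)) := by
      rw [← e1, ee, ee, ← Complex.exp_conj]
      have h2 : (starRingEnd ℂ) 2 = 2 := Complex.conj_ofReal 2
      simp only [map_mul, Complex.conj_ofReal, Complex.conj_I, map_intCast, h2]
      congr 1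
      push_cast
      ring
    have e3 := Complex.sub_conj (z ^ (k + 1) / ((k : ℂ) + 1))
    rw [e1, e2]
    have hk : (k : ℂ) + 1 ≠ 0 := by exact_mod_cast k.succ_ne_zero
    have hpi' : (Real.pi : ℂ) ≠ 0 := by exact_mod_cast hpi
    rw [map_div₀] at e3
    simp only [map_add, map_one, map_natCast] at e3
    push_cast at e3 ⊢
    have hI := Complex.I_ne_zero
    rw [eq_div_iff hpi']
    have : ((z ^ (k + 1) / ((k : ℂ) + 1)).im : ℂ) =
        (z ^ (k + 1) / ((k : ℂ) + 1) - (starRingEnd ℂ) (z ^ (k + 1)) / ((k : ℂ) + 1)) / (2 * Complex.I) := by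
      rw [e3]; field_simp
    rw [this]
    field_simp
    ring
  · congr 2
    field_simp
    ring

lemma SS_add_one (x : ℝ) (M : ℕ) : SS (x + 1) M = SS x M := by
  refine Finset.sum_congr rfl fun m _ => ?_
  have : ee (x + 1) m = ee x m := by
    rw [ee, ee, Complex.exp_eq_exp_iff_exists_int]
    exact ⟨m, by push_cast; ring⟩
  rw [this]

noncomputable def chi (p : ℕ) [Fact p.Prime] : MulChar (ZMod p) ℂ :=
  (quadraticChar (ZMod p)).ringHomComp (Int.castRingHom ℂ)

lemma chi_int (p : ℕ) [Fact p.Prime] (m : ℤ) : chi p (m : ZMod p) = (legendreSym p m : ℂ) := by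
  simp [chi, legendreSym]

lemma chi_nat (p : ℕ) [Fact p.Prime] (m : ℕ) : chi p (m : ZMod p) = (legendreSym p m : ℂ) := by
  rw [← chi_int]; simp

lemma chi_ne_one (p : ℕ) [Fact p.Prime] (hp : p ≠ 2) : chi p ≠ 1 := by
  rw [chi, MulChar.ringHomComp_ne_one_iff Int.cast_injective]
  exact quadraticChar_ne_one (by rwa [ZMod.ringChar_zmod_n])

lemma sum_zmod (p : ℕ) [Fact p.Prime] (f : ZMod p → ℂ) :
    ∑ a, f a = ∑ n ∈ Finset.range p, f (n : ZMod p) := by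
  refine (Finset.sum_nbij' (fun n : ℕ => (n : ZMod p)) (fun a => a.val) ?_ ?_ ?_ ?_ ?_).symm
  · simp
  · intro a _; simpa using a.val_lt
  · intro n hn; exact ZMod.val_cast_of_lt (Finset.mem_range.1 hn)
  · intro a _; simp
  · simp

lemma gauss_sep (p : ℕ) [Fact p.Prime] (hp : p ≠ 2) (m : ℤ) :
    (∑ n ∈ Finset.range p, Complex.exp (2 * Real.pi * Complex.I * (n : ℂ) / (p : ℂ)) *
        (legendreSym p (n : ℤ) : ℂ)) * (legendreSym p m : ℂ) =
      ∑ n ∈ Finset.range p, (legendreSym p (n : ℤ) : ℂ) * ee ((n : ℝ) / p) m := by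
  have hq : (chi p).IsQuadratic := (quadraticChar_isQuadratic (ZMod p)).comp _
  have h1 : ∑ n ∈ Finset.range p, Complex.exp (2 * Real.pi * Complex.I * (n : ℂ) / (p : ℂ)) *
        (legendreSym p (n : ℤ) : ℂ) = gaussSum (chi p) ZMod.stdAddChar := by
    rw [gaussSum, sum_zmod]
    refine Finset.sum_congr rfl fun n _ => ?_
    have := ZMod.stdAddChar_coe (N := p) (n : ℤ)
    push_cast at this
    rw [chi_nat, this, mul_comm]
  have h2 : ∑ n ∈ Finset.range p, (legendreSym p (n : ℤ) : ℂ) * ee ((n : ℝ) / p) m =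
      gaussSum (chi p) (AddChar.mulShift ZMod.stdAddChar (m : ZMod p)) := by
    rw [gaussSum, sum_zmod]
    refine Finset.sum_congr rfl fun n _ => ?_
    have := ZMod.stdAddChar_coe (N := p) (m * n : ℤ)
    push_cast at this
    rw [chi_nat, AddChar.mulShift_apply, this, ee]
    congr 2
    push_cast; ring
  rw [h1, h2]
  by_cases hm : (m : ZMod p) = 0
  · rw [(legendreSym.eq_zero_iff p m).2 hm, hm]
    simp only [gaussSum, AddChar.mulShift_apply, zero_mul, AddChar.map_zero_eq_one, mul_one,
      MulChar.sum_eq_zero_of_ne_one (chi_ne_one p hp), Int.cast_zero, mul_zero]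
  · have := gaussSum_mulShift_eq (chi p) ZMod.stdAddChar (Units.mk0 _ hm)
    rw [Units.val_mk0, hq.inv, chi_int] at this
    rw [this, mul_comm]

lemma gauss_ne_zero (p : ℕ) [Fact p.Prime] (hp : p ≠ 2) :
    (∑ n ∈ Finset.range p, Complex.exp (2 * Real.pi * Complex.I * (n : ℂ) / (p : ℂ)) *
        (legendreSym p (n : ℤ) : ℂ)) ≠ 0 := by
  have h1 : ∑ n ∈ Finset.range p, Complex.exp (2 * Real.pi * Complex.I * (n : ℂ) / (p : ℂ)) *
        (legendreSym p (n : ℤ) : ℂ) = gaussSum (chi p) ZMod.stdAddChar := by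
    rw [gaussSum, sum_zmod]
    refine Finset.sum_congr rfl fun n _ => ?_
    have := ZMod.stdAddChar_coe (N := p) (n : ℤ)
    push_cast at this
    rw [chi_nat, this, mul_comm]
  rw [h1]
  refine gaussSum_ne_zero_of_nontrivial ?_ (chi_ne_one p hp) (ZMod.isPrimitive_stdAddChar p)
  simp [(Fact.out : p.Prime).ne_zero]

lemma diff_tendsto (x α : ℝ) (hx0 : 0 < x) (hx1 : x < 1) (h0 : 0 < α) (h1 : α < 1) (hne : x ≠ α) :
    Tendsto (fun M => SS x M - SS (x - α) M) atTop (nhds ((if x < α then (1 : ℂ) else 0) - α)) := by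
  split_ifs with h
  · have h2 := (SS_tendsto x hx0 hx1).sub (SS_tendsto (x - α + 1) (by linarith) (by linarith))
    simp only [SS_add_one] at h2
    convert h2 using 2
    push_cast; ring
  · have h' : α < x := lt_of_le_of_ne (not_lt.1 h) hne.symm
    have h2 := (SS_tendsto x hx0 hx1).sub (SS_tendsto (x - α) (by linarith) (by linarith))
    convert h2 using 2
    push_cast; ring


/-- **Fourier expansion of `L(α,p)`.** For an odd prime `p` and `0 < α < 1`
with `αp ∉ ℤ`, the symmetric partial sums
`∑_{0<|m|≤M} ((1 - e^{-2πiαm})/(2πim)) (m/p)` converge, and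
`L(α,p) = τ(χ_p) · lim_{M→∞} ∑_{0<|m|≤M} ((1 - e^{-2πiαm})/(2πim)) (m/p)`,
where `τ(χ_p) = ∑_{n=0}^{p-1} e^{2πin/p} (n/p)` is the quadratic Gauss sum. -/
theorem stmt_4 (p : ℕ) [Fact p.Prime] (hp : p ≠ 2) (α : ℝ) (h0 : 0 < α)
    (h1 : α < 1) (hint : ∀ k : ℤ, α * (p : ℝ) ≠ (k : ℝ)) :
    ∃ l : ℂ,
      Tendsto (fun M : ℕ =>
          ∑ m ∈ (Finset.Icc (-(M : ℤ)) (M : ℤ)).erase 0,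
            (1 - Complex.exp (-2 * Real.pi * Complex.I * (α : ℂ) * (m : ℂ))) /
                (2 * Real.pi * Complex.I * (m : ℂ)) * (legendreSym p m : ℂ))
        atTop (nhds l) ∧
      ((∑ n ∈ Finset.Icc 1 ⌊α * (p : ℝ)⌋₊, legendreSym p (n : ℤ) : ℤ) : ℂ) =
        (∑ n ∈ Finset.range p,
            Complex.exp (2 * Real.pi * Complex.I * (n : ℂ) / (p : ℂ)) *
              (legendreSym p (n : ℤ) : ℂ)) * l := by
  have hp0 : 0 < p := (Fact.out : p.Prime).pos
  have hpR : (0 : ℝ) < p := by exact_mod_cast hp0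
  set τ := ∑ n ∈ Finset.range p, Complex.exp (2 * Real.pi * Complex.I * (n : ℂ) / (p : ℂ)) *
              (legendreSym p (n : ℤ) : ℂ) with hτ
  have hτ0 : τ ≠ 0 := gauss_ne_zero p hp
  set L : ℂ := ((∑ n ∈ Finset.Icc 1 ⌊α * (p : ℝ)⌋₊, legendreSym p (n : ℤ) : ℤ) : ℂ) with hL
  have hchi0 : ∑ n ∈ Finset.range p, (legendreSym p (n : ℤ) : ℂ) = 0 := by
    rw [← MulChar.sum_eq_zero_of_ne_one (chi_ne_one p hp), sum_zmod]
    exact Finset.sum_congr rfl fun n _ => (chi_nat p n).symm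
  have key : Tendsto (fun M : ℕ => ∑ n ∈ Finset.range p, (legendreSym p (n : ℤ) : ℂ) *
      (SS ((n : ℝ) / p) M - SS ((n : ℝ) / p - α) M)) atTop (nhds L) := by
    have hval : L = ∑ n ∈ Finset.range p, (legendreSym p (n : ℤ) : ℂ) *
        ((if (n : ℝ) / p < α then (1 : ℂ) else 0) - α) := by
      simp only [mul_sub, Finset.sum_sub_distrib, ← Finset.sum_mul, hchi0, zero_mul, sub_zero,
        mul_ite, mul_one, mul_zero]
      rw [← Finset.sum_filter, hL, Int.cast_sum]
      refine Finset.sum_subset_zero_on_sdiff ?_ ?_ (fun _ _ => rfl)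
      · intro n hn
        rw [Finset.mem_Icc, Nat.le_floor_iff (by positivity)] at hn
        rw [Finset.mem_filter, Finset.mem_range, div_lt_iff₀ hpR]
        have hlt : (n : ℝ) < α * p := lt_of_le_of_ne hn.2 fun h => hint n (by rw [← h]; simp)
        refine ⟨?_, hlt⟩
        have : (n : ℝ) < p := by nlinarith
        exact_mod_cast this
      · intro n hn
        rw [Finset.mem_sdiff, Finset.mem_filter, Finset.mem_Icc, Nat.le_floor_iff (by positivity),
          div_lt_iff₀ hpR] at hn
        have : n = 0 := by
          by_contra h
          exact hn.2 ⟨Nat.one_le_iff_ne_zero.2 h, hn.1.2.le⟩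
        subst this
        simp
    rw [hval]
    refine tendsto_finsetSum _ fun n hn => ?_
    rcases Nat.eq_zero_or_pos n with rfl | hpos
    · simp
    · refine Tendsto.const_mul _ (diff_tendsto _ α ?_ ?_ h0 h1 ?_)
      · positivity
      · rw [div_lt_one hpR]; exact_mod_cast Finset.mem_range.1 hn
      · intro h
        apply hint n
        rw [← h]; field_simp; simp
  refine ⟨τ⁻¹ * L, ?_, by rw [mul_inv_cancel_left₀ hτ0]⟩
  refine (key.const_mul τ⁻¹).congr fun M => ?_
  rw [inv_mul_eq_iff_eq_mul₀ hτ0]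
  simp only [SS, ← Finset.sum_sub_distrib, Finset.mul_sum]
  rw [Finset.sum_comm]
  refine Finset.sum_congr rfl fun m _ => ?_
  rw [mul_left_comm, gauss_sep p hp m, Finset.mul_sum]
  refine Finset.sum_congr rfl fun n _ => ?_
  have : ee ((n : ℝ) / p - α) m = ee ((n : ℝ) / p) m *
      Complex.exp (-2 * Real.pi * Complex.I * (α : ℂ) * (m : ℂ)) := by
    rw [ee, ee, ← Complex.exp_add]; congr 1; push_cast; ring
  rw [this]
  ring
end

section
/- Let p be a prime with p ≡ 1 (mod 4), and let α be a real number with 0 < α < 1 such that αp is not an integer. Then the partial sums Σ_{m=1}^{M} (sin(2πmα)/m) · (m/p) converge as M → ∞ to (π/√p) · L(α,p). -/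
open Filter
open Polynomial


lemma saw_log (w : ℂ) (hw : ‖w‖ = 1) (hw1 : w ≠ 1) :
    Tendsto (fun M : ℕ => ∑ m ∈ Finset.range M, w ^ m / (m : ℂ)) atTop
      (nhds (-Complex.log (1 - w))) := by
  have hcs : CauchySeq (fun n : ℕ => ∑ i ∈ Finset.range n, ((1 : ℝ) / ((i : ℝ) + 1)) • w ^ (i + 1)) := by
    refine Antitone.cauchySeq_series_mul_of_tendsto_zero_of_bounded (b := 2 / ‖w - 1‖) ?_ ?_ ?_
    · intro a b hab
      have : (a : ℝ) ≤ b := by exact_mod_cast hab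
      simp only
      gcongr
    · exact tendsto_one_div_add_atTop_nhds_zero_nat
    · intro n
      have h1 : ∑ i ∈ Finset.range n, w ^ (i + 1) = w * ((w ^ n - 1) / (w - 1)) := by
        rw [← geom_sum_eq hw1, Finset.mul_sum]
        exact Finset.sum_congr rfl fun i _ => by ring
      rw [h1, norm_mul, norm_div, hw, one_mul]
      gcongr
      calc ‖w ^ n - 1‖ ≤ ‖w ^ n‖ + ‖(1 : ℂ)‖ := norm_sub_le _ _
        _ = 2 := by simp [hw]; norm_num
  obtain ⟨l, hl⟩ := cauchySeq_tendsto_of_complete hcs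
  have hl2 : Tendsto (fun M : ℕ => ∑ m ∈ Finset.range M, w ^ m / (m : ℂ)) atTop (nhds l) := by
    rw [← tendsto_add_atTop_iff_nat 1]
    refine hl.congr fun n => ?_
    rw [Finset.sum_range_succ']
    simp only [Nat.cast_zero, div_zero, add_zero]
    refine Finset.sum_congr rfl fun i _ => ?_
    rw [Complex.real_smul]
    push_cast
    ring
  have hab := Complex.tendsto_tsum_powerSeries_nhdsWithin_lt hl2
  rw [tendsto_map'_iff] at hab
  have hre : w.re < 1 := by
    have h1 : w.re ≤ 1 := hw ▸ Complex.re_le_norm w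
    refine lt_of_le_of_ne h1 fun h => hw1 ?_
    have h2 := Complex.sq_norm w
    rw [hw, Complex.normSq_apply, h] at h2
    apply Complex.ext
    · simpa using h
    · have : w.im * w.im = 0 := by linarith
      simpa using this
  have hlog : Tendsto (fun r : ℝ => -Complex.log (1 - w * (r : ℂ))) (nhdsWithin 1 (Set.Iio 1))
      (nhds (-Complex.log (1 - w))) := by
    have : ContinuousAt (fun r : ℝ => -Complex.log (1 - w * (r : ℂ))) 1 := by
      refine ContinuousAt.neg (ContinuousAt.clog (by fun_prop) ?_)
      left
      simpa using hre
    have h2 := this.tendsto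
    simp only [Complex.ofReal_one, mul_one] at h2
    exact h2.mono_left nhdsWithin_le_nhds
  have heq : ((fun z : ℂ => ∑' n : ℕ, w ^ n / (n : ℂ) * z ^ n) ∘ Complex.ofReal) =ᶠ[nhdsWithin 1 (Set.Iio 1)]
      (fun r : ℝ => -Complex.log (1 - w * (r : ℂ))) := by
    have : Set.Ioo (0 : ℝ) 1 ∈ nhdsWithin (1 : ℝ) (Set.Iio 1) := Ioo_mem_nhdsLT (by norm_num)
    filter_upwards [this] with r hr
    have h1 : ‖w * (r : ℂ)‖ < 1 := by
      rw [norm_mul, hw, one_mul, Complex.norm_real, Real.norm_eq_abs, abs_of_pos hr.1]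
      exact hr.2
    rw [← (Complex.hasSum_taylorSeries_neg_log h1).tsum_eq]
    simp only [Function.comp]
    refine tsum_congr fun n => ?_
    rw [mul_pow]; ring
  have := tendsto_nhds_unique (hab.congr' heq) hlog
  rwa [this] at hl2

lemma saw (x : ℝ) (hx0 : 0 < x) (hx1 : x < 1) :
    Tendsto (fun M : ℕ => ∑ m ∈ Finset.range M, Real.sin (2 * Real.pi * (m : ℝ) * x) / (m : ℝ)) atTop
      (nhds (Real.pi * (1 / 2 - x))) := by
  have hpi := Real.pi_pos
  have hs : 0 < Real.sin (Real.pi * x) := Real.sin_pos_of_pos_of_lt_pi (by positivity) (by nlinarith)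
  set w : ℂ := Complex.exp ((2 * Real.pi * x : ℝ) * Complex.I) with hw
  have hpol : 1 - w = ((2 * Real.sin (Real.pi * x) : ℝ) : ℂ) *
      (Complex.cos ((Real.pi * x - Real.pi / 2 : ℝ) : ℂ) + Complex.sin ((Real.pi * x - Real.pi / 2 : ℝ) : ℂ) * Complex.I) := by
    rw [hw, Complex.exp_mul_I, ← Complex.ofReal_cos, ← Complex.ofReal_sin, ← Complex.ofReal_cos,
      ← Complex.ofReal_sin, Real.cos_sub_pi_div_two, Real.sin_sub_pi_div_two,
      show 2 * Real.pi * x = 2 * (Real.pi * x) by ring, Real.cos_two_mul, Real.sin_two_mul]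
    have := Real.sin_sq_add_cos_sq (Real.pi * x)
    apply Complex.ext
    · simp [Complex.add_re, Complex.mul_re, -Complex.ofReal_cos, -Complex.ofReal_sin, -Complex.ofReal_mul, ← pow_two]
      linarith
    · simp [Complex.add_im, Complex.mul_im, -Complex.ofReal_cos, -Complex.ofReal_sin, -Complex.ofReal_mul]
  have harg : Complex.arg (1 - w) = Real.pi * x - Real.pi / 2 := by
    rw [hpol, Complex.arg_mul_cos_add_sin_mul_I (by positivity)]
    constructor <;> nlinarith
  have hw1 : w ≠ 1 := by
    intro h
    rw [h] at harg hpol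
    have h0 := congrArg norm hpol
    rw [← Complex.exp_mul_I, norm_mul, Complex.norm_exp_ofReal_mul_I] at h0
    simp at h0
    exact hs.ne' (by exact_mod_cast h0)
  have h := saw_log w (Complex.norm_exp_ofReal_mul_I _) hw1
  have h2 := (Complex.continuous_im.tendsto _).comp h
  rw [Complex.neg_im, Complex.log_im, harg] at h2
  convert h2 using 2 with M
  · simp only [Function.comp, Complex.im_sum]
    refine Finset.sum_congr rfl fun m _ => ?_
    rw [hw, ← Complex.exp_nat_mul, show (m : ℂ) * ((2 * Real.pi * x : ℝ) * Complex.I) =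
      ((2 * Real.pi * m * x : ℝ) : ℂ) * Complex.I by push_cast; ring, ← Complex.ofReal_natCast,
      Complex.div_ofReal_im, Complex.exp_ofReal_mul_I_im]
  · ring


/-- the Euler operator -/
noncomputable def eulerD (R : Type*) [CommRing R] : R[X] →ₗ[R] R[X] :=
  (LinearMap.mulLeft R (X : R[X])) ∘ₗ Polynomial.derivative

lemma eulerD_apply {R : Type*} [CommRing R] (f : R[X]) : eulerD R f = X * derivative f := rfl

lemma eulerD_pow_X {R : Type*} [CommRing R] (m j : ℕ) :
    ((eulerD R) ^ m) (X ^ j) = C ((j : R) ^ m) * X ^ j := by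
  induction m with
  | zero => simp
  | succ m ih =>
    rw [pow_succ', Module.End.mul_apply, ih, eulerD_apply, derivative_C_mul, derivative_X_pow]
    rcases j with _ | j
    · simp
    · simp only [Nat.add_sub_cancel, map_pow, map_natCast]
      ring

lemma eulerD_pow_eval {R : Type*} [CommRing R] (m : ℕ) : ∀ (g : R[X]),
    (((eulerD R) ^ m) ((X - 1) ^ m * g)).eval 1 = (m.factorial : R) * g.eval 1 := by
  induction m with
  | zero => simp
  | succ m ih =>
    intro g
    have : eulerD R ((X - 1) ^ (m + 1) * g) =
        (X - 1) ^ m * (((m : R[X]) + 1) * X * g + (X - 1) * X * derivative g) := by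
      rw [eulerD_apply, derivative_mul, derivative_pow]
      simp
      ring
    rw [pow_succ, Module.End.mul_apply, this, ih, Nat.factorial_succ]
    simp
    ring

lemma half_fact_sq (p n : ℕ) [Fact p.Prime] (hp : p = 4 * n + 1) :
    (((2 * n).factorial : ZMod p)) ^ 2 = -1 := by
  have h := ZMod.wilsons_lemma p
  have e : p - 1 = 2 * n + 2 * n := by omega
  rw [e, ← Nat.factorial_mul_ascFactorial, Nat.ascFactorial_eq_prod_range] at h
  have h2 : ((∏ i ∈ Finset.range (2 * n), (2 * n + 1 + i) : ℕ) : ZMod p) = ((2 * n).factorial : ZMod p) := by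
    rw [← Finset.prod_range_add_one_eq_factorial, Nat.cast_prod, Nat.cast_prod, ← Finset.prod_range_reflect]
    have : ∀ j ∈ Finset.range (2 * n), ((2 * n + 1 + (2 * n - 1 - j) : ℕ) : ZMod p) = (-1) * ((j + 1 : ℕ) : ZMod p) := by
      intro j hj
      rw [Finset.mem_range] at hj
      have h3 : 2 * n + 1 + (2 * n - 1 - j) + (j + 1) = p := by omega
      have h4 := congrArg (Nat.cast : ℕ → ZMod p) h3
      rw [Nat.cast_add, ZMod.natCast_self] at h4
      linear_combination h4
    rw [Finset.prod_congr rfl this, Finset.prod_mul_distrib]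
    simp
  rw [Nat.cast_mul, h2] at h
  rw [pow_two, h]

/-- the sign is determined by a congruence. -/
lemma gauss_sign_one (p n : ℕ) [Fact p.Prime] (hp : p = 4 * n + 1) (ζ : ℂ) (hζ : IsPrimitiveRoot ζ p)
    (ε : ℤ) (hε : ε = 1 ∨ ε = -1) (N : ℕ)
    (h : ∑ j ∈ Finset.range p, (legendreSym p (j : ℤ) : ℂ) * ζ ^ j =
      ε * (ζ ^ N * ∏ k ∈ Finset.range (2 * n), (ζ ^ (k + 1) - 1))) : ε = 1 := by
  have hpp : p.Prime := Fact.out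
  have hn : 0 < n := by
    rcases Nat.eq_zero_or_pos n with h | h
    · subst h; simp at hp; exact absurd hp hpp.one_lt.ne'
    · exact h
  set F : ℤ[X] := ∑ j ∈ Finset.range p, C (legendreSym p (j : ℤ)) * X ^ j -
    C ε * (X ^ N * ∏ k ∈ Finset.range (2 * n), (X ^ (k + 1) - 1)) with hF
  have hroot : aeval ζ F = 0 := by
    rw [hF, map_sub, map_sum]
    simp only [map_mul, map_pow, map_prod, map_sub, aeval_X, map_one, aeval_C]
    simp only [algebraMap_int_eq, eq_intCast]
    rw [h, sub_self]
  have hdvd : cyclotomic p ℤ ∣ F := by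
    rw [cyclotomic_eq_minpoly hζ hpp.pos]
    exact minpoly.isIntegrallyClosed_dvd (hζ.isIntegral hpp.pos) hroot
  have hdvd2 : (X - 1 : (ZMod p)[X]) ^ (p - 1) ∣ F.map (Int.castRingHom (ZMod p)) := by
    have h1 := Polynomial.map_dvd (Int.castRingHom (ZMod p)) hdvd
    have h2 := cyclotomic_mul_prime_eq_pow_of_not_dvd (ZMod p) (p := p) (n := 1) hpp.not_dvd_one
    rw [one_mul, cyclotomic_one] at h2
    rwa [map_cyclotomic, h2] at h1
  obtain ⟨g, hg⟩ := hdvd2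
  have hgeom : ∏ k ∈ Finset.range (2 * n), ((X : (ZMod p)[X]) ^ (k + 1) - 1) =
      (X - 1) ^ (2 * n) * ∏ k ∈ Finset.range (2 * n), ∑ i ∈ Finset.range (k + 1), X ^ i := by
    simp only [← mul_geom_sum, Finset.prod_mul_distrib, Finset.prod_const, Finset.card_range]
  rw [hF] at hg
  simp only [Polynomial.map_sub, Polynomial.map_sum, Polynomial.map_mul, Polynomial.map_pow, map_X, map_C,
    Polynomial.map_prod, Polynomial.map_one, hgeom] at hg
  have h3 := congrArg (fun f => (((eulerD (ZMod p)) ^ (2 * n)) f).eval 1) hg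
  have e1 : (X - 1 : (ZMod p)[X]) ^ (p - 1) * g = (X - 1) ^ (2 * n) * ((X - 1) ^ (2 * n) * g) := by
    rw [← mul_assoc, ← pow_add]; congr 2; omega
  have e2 : ∀ Q : (ZMod p)[X], (C ((Int.castRingHom (ZMod p)) ε) * (X ^ N * ((X - 1) ^ (2 * n) * Q))) =
     (X - 1) ^ (2 * n) * (C ((Int.castRingHom (ZMod p)) ε) * X ^ N * Q) := fun Q => by ring
  simp only [e1, e2, map_sub, map_sum, eval_sub, eulerD_pow_eval] at h3
  simp only [← smul_eq_C_mul, map_smul, eulerD_pow_X] at h3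
  have hl : ∑ j ∈ Finset.range p, (Int.castRingHom (ZMod p)) (legendreSym p (j : ℤ)) * (j : ZMod p) ^ (2 * n) = -1 := by
    have : ∀ j ∈ Finset.range p, (Int.castRingHom (ZMod p)) (legendreSym p (j : ℤ)) * (j : ZMod p) ^ (2 * n) =
        if j = 0 then 0 else 1 := by
      intro j hj
      rw [Finset.mem_range] at hj
      rw [eq_intCast, legendreSym.eq_pow, show p / 2 = 2 * n by omega, Int.cast_natCast, ← pow_add]
      split_ifs with h0
      · subst h0
        rw [Nat.cast_zero, zero_pow (by omega)]
      · rw [show 2 * n + 2 * n = p - 1 by omega]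
        apply ZMod.pow_card_sub_one_eq_one
        rw [Ne, ZMod.natCast_eq_zero_iff]
        intro hd
        exact absurd (Nat.le_of_dvd (Nat.pos_of_ne_zero h0) hd) (by omega)
    rw [Finset.sum_congr rfl this]
    obtain ⟨q, rfl⟩ : ∃ q, p = q + 1 := ⟨p - 1, by omega⟩
    rw [Finset.sum_range_succ']
    have := ZMod.natCast_self (q + 1)
    push_cast at this
    simp
    linear_combination this
  have hpr : (∏ k ∈ Finset.range (2 * n), ((k : ZMod p) + 1)) = ((2 * n).factorial : ZMod p) := by
    rw [← Finset.prod_range_add_one_eq_factorial]; push_cast; rfl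
  simp [eval_finsetSum, eval_prod, -zpow_natCast] at h3
  simp only [eq_intCast] at hl
  rw [hl, hpr] at h3
  simp [hn.ne'] at h3
  have h4 := half_fact_sq p n hp
  have h5 : (ε : ZMod p) = 1 := by linear_combination h3 + (ε : ZMod p) * h4
  rcases hε with h | h
  · exact h
  · exfalso
    subst h
    have : ((2 : ℕ) : ZMod p) = 0 := by push_cast at h5 ⊢; linear_combination -h5
    rw [ZMod.natCast_eq_zero_iff] at this
    have := Nat.le_of_dvd (by norm_num) this
    omega


lemma prod_zeta (p n : ℕ) [Fact p.Prime] (hp : p = 4 * n + 1) :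
    ∏ k ∈ Finset.range (2 * n), (Complex.exp (2 * Real.pi * Complex.I / p) ^ (k + 1) - 1) =
     Complex.exp (2 * Real.pi * Complex.I / p) ^ (n * (3 * n + 1)) * (Real.sqrt p : ℂ) := by
  have hpp : p.Prime := Fact.out
  have hp0 : (p : ℂ) ≠ 0 := by exact_mod_cast hpp.ne_zero
  have hp0' : (0 : ℝ) < p := by exact_mod_cast hpp.pos
  have hpi := Real.pi_pos
  set ζ := Complex.exp (2 * Real.pi * Complex.I / p) with hζ
  have hterm : ∀ k : ℕ, ζ ^ k - 1 = Complex.exp (Real.pi * Complex.I / p) ^ k * Complex.I *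
      ((2 * Real.sin (Real.pi * k / p) : ℝ) : ℂ) := by
    intro k
    have h1 : ζ ^ k = (Complex.exp ((Real.pi * k / p : ℝ) * Complex.I)) ^ 2 := by
      rw [hζ, ← Complex.exp_nat_mul, ← Complex.exp_nat_mul]; congr 1; push_cast; ring
    have h2 : Complex.exp (Real.pi * Complex.I / p) ^ k = Complex.exp ((Real.pi * k / p : ℝ) * Complex.I) := by
      rw [← Complex.exp_nat_mul]; congr 1; push_cast; ring
    rw [h1, h2, Complex.exp_mul_I]
    push_cast
    have h3 := Complex.sin_sq_add_cos_sq (Real.pi * k / p : ℂ)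
    have h4 := Complex.I_sq
    linear_combination h3 + (Complex.sin (Real.pi * k / p : ℂ)) ^ 2 * (-h4)
  set R : ℝ := ∏ k ∈ Finset.range (2 * n), (2 * Real.sin (Real.pi * ((k + 1 : ℕ) : ℝ) / p)) with hR
  have hRpos : 0 < R := by
    apply Finset.prod_pos
    intro k hk
    rw [Finset.mem_range] at hk
    have h1 : ((k + 1 : ℕ) : ℝ) < p := by
      have : k + 1 < p := by omega
      exact_mod_cast this
    have : 0 < Real.sin (Real.pi * ((k + 1 : ℕ) : ℝ) / p) := by
      apply Real.sin_pos_of_pos_of_lt_pi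
      · positivity
      · rw [div_lt_iff₀ hp0']; exact mul_lt_mul_of_pos_left h1 hpi
    linarith
  have hprim : IsPrimitiveRoot ζ p := Complex.isPrimitiveRoot_exp p hpp.ne_zero
  have hR2 : R = Real.sqrt p := by
    symm
    rw [Real.sqrt_eq_iff_mul_self_eq hp0'.le hRpos.le]
    have hprim' : IsPrimitiveRoot ζ (4 * n + 1) := hp ▸ hprim
    have h1 := congrArg norm hprim'.prod_one_sub_pow_eq_order
    rw [norm_prod] at h1
    have h2 : ∀ k : ℕ, k < 4 * n → ‖1 - ζ ^ (k + 1)‖ = 2 * Real.sin (Real.pi * ((k + 1 : ℕ) : ℝ) / p) := by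
      intro k hk
      rw [norm_sub_rev, hterm, norm_mul, norm_mul, norm_pow, Complex.norm_I,
        show (Real.pi * Complex.I / p : ℂ) = ((Real.pi / p : ℝ) : ℂ) * Complex.I by push_cast; ring,
        Complex.norm_exp_ofReal_mul_I, Complex.norm_real, Real.norm_eq_abs, one_pow, one_mul, one_mul,
        abs_of_nonneg]
      have h1 : ((k + 1 : ℕ) : ℝ) ≤ p := by
        have : k + 1 ≤ p := by omega
        exact_mod_cast this
      have : 0 ≤ Real.sin (Real.pi * ((k + 1 : ℕ) : ℝ) / p) := by
        apply Real.sin_nonneg_of_nonneg_of_le_pi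
        · positivity
        · rw [div_le_iff₀ hp0']; exact mul_le_mul_of_nonneg_left h1 hpi.le
      linarith
    rw [Finset.prod_congr rfl fun k hk => h2 k (Finset.mem_range.1 hk),
      show 4 * n = 2 * n + 2 * n by omega, Finset.prod_range_add, ← hR] at h1
    have h3 : ∏ x ∈ Finset.range (2 * n), 2 * Real.sin (Real.pi * ((2 * n + x + 1 : ℕ) : ℝ) / p) = R := by
      rw [hR, ← Finset.prod_range_reflect]
      refine Finset.prod_congr rfl fun j hj => ?_
      rw [Finset.mem_range] at hj
      have h3 : 2 * n + (2 * n - 1 - j) + 1 + (j + 1) = p := by omega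
      have h4 := congrArg (Nat.cast : ℕ → ℝ) h3
      rw [Nat.cast_add] at h4
      rw [← Real.sin_pi_sub]
      congr 2
      field_simp
      linarith
    rw [h3] at h1
    rw [h1]
    have : (p : ℝ) = ‖(p : ℂ)‖ := by simp
    rw [this, hp]
    congr 1
    push_cast
    ring
  have hS : ∑ k ∈ Finset.range (2 * n), (k + 1) = n * (2 * n + 1) := by
    have h := Finset.sum_range_id_mul_two (2 * n + 1)
    rw [Finset.sum_range_succ'] at h
    simp at h
    nlinarith
  simp only [hterm, Finset.prod_mul_distrib, Finset.prod_const, Finset.card_range]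
  rw [← Complex.ofReal_prod, ← hR, hR2, Finset.prod_pow_eq_pow_sum, hS]
  congr 1
  rw [pow_mul Complex.I, Complex.I_sq, ← Complex.exp_pi_mul_I, hζ, ← Complex.exp_nat_mul,
    ← Complex.exp_nat_mul, ← Complex.exp_nat_mul, ← Complex.exp_add]
  congr 1
  have : (p : ℂ) = 4 * n + 1 := by rw [hp]; push_cast; ring
  field_simp
  rw [this]
  push_cast
  ring

lemma sum_zmod_range {A : Type*} [AddCommMonoid A] (p : ℕ) [NeZero p] (f : ZMod p → A) :
    ∑ a, f a = ∑ j ∈ Finset.range p, f (j : ZMod p) := by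
  symm
  refine Finset.sum_bij (fun j _ => (j : ZMod p)) (fun _ _ => Finset.mem_univ _) ?_ ?_ (fun _ _ => rfl)
  · intro a ha b hb hab
    rw [Finset.mem_range] at ha hb
    have := congrArg ZMod.val hab
    rwa [ZMod.val_natCast_of_lt ha, ZMod.val_natCast_of_lt hb] at this
  · intro b _
    exact ⟨b.val, Finset.mem_range.2 (ZMod.val_lt b), ZMod.natCast_zmod_val b⟩

/-- the quadratic character with complex values -/
noncomputable def chiC (p : ℕ) [Fact p.Prime] : MulChar (ZMod p) ℂ :=
  (quadraticChar (ZMod p)).ringHomComp (Int.castRingHom ℂ)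

lemma chiC_natCast (p : ℕ) [Fact p.Prime] (j : ℕ) : chiC p (j : ZMod p) = (legendreSym p (j : ℤ) : ℂ) := by
  simp [chiC, legendreSym, MulChar.ringHomComp_apply]

lemma std_natCast (p : ℕ) [Fact p.Prime] (j : ℕ) :
    ZMod.stdAddChar (j : ZMod p) = Complex.exp (2 * Real.pi * Complex.I / p) ^ j := by
  have := ZMod.stdAddChar_coe (N := p) (j : ℤ)
  rw [Int.cast_natCast] at this
  rw [this, ← Complex.exp_nat_mul]
  congr 1
  push_cast
  ring

lemma chiC_neg_one (p n : ℕ) [Fact p.Prime] (hp : p = 4 * n + 1) : chiC p (-1) = 1 := by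
  have h2 : ringChar (ZMod p) ≠ 2 := by rw [ZMod.ringChar_zmod_n]; omega
  rw [chiC, MulChar.ringHomComp_apply, quadraticChar_neg_one h2, ZMod.card,
    ZMod.χ₄_nat_one_mod_four (by omega)]
  simp

lemma gauss_value (p n : ℕ) [Fact p.Prime] (hp : p = 4 * n + 1) :
    gaussSum (chiC p) (ZMod.stdAddChar (N := p)) = (Real.sqrt p : ℂ) := by
  have hpp : p.Prime := Fact.out
  have h2 : ringChar (ZMod p) ≠ 2 := by rw [ZMod.ringChar_zmod_n]; omega
  have hne : chiC p ≠ 1 := by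
    rw [chiC, Ne, MulChar.ringHomComp_eq_one_iff (RingHom.injective_int _)]
    exact quadraticChar_ne_one h2
  have hsq := gaussSum_sq hne ((quadraticChar_isQuadratic (ZMod p)).comp (Int.castRingHom ℂ))
    (ZMod.isPrimitive_stdAddChar p)
  rw [chiC_neg_one p n hp, ZMod.card, one_mul] at hsq
  have hs : ((Real.sqrt p : ℝ) : ℂ) ^ 2 = p := by
    rw [← Complex.ofReal_pow, Real.sq_sqrt (by positivity)]; simp
  set ζ := Complex.exp (2 * Real.pi * Complex.I / p) with hζ
  have hprim : IsPrimitiveRoot ζ p := Complex.isPrimitiveRoot_exp p hpp.ne_zero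
  have hG : gaussSum (chiC p) (ZMod.stdAddChar (N := p)) =
      ∑ j ∈ Finset.range p, (legendreSym p (j : ℤ) : ℂ) * ζ ^ j := by
    rw [gaussSum, sum_zmod_range]
    exact Finset.sum_congr rfl fun j _ => by rw [chiC_natCast, std_natCast]
  have hQ : ζ ^ (4 * n * (n * (3 * n + 1))) * ∏ k ∈ Finset.range (2 * n), (ζ ^ (k + 1) - 1) = (Real.sqrt p : ℂ) := by
    rw [prod_zeta p n hp, ← hζ, ← mul_assoc, ← pow_add,
      show 4 * n * (n * (3 * n + 1)) + n * (3 * n + 1) = p * (n * (3 * n + 1)) by rw [hp]; ring,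
      pow_mul, hprim.pow_eq_one, one_pow, one_mul]
  rcases sq_eq_sq_iff_eq_or_eq_neg.1 (hsq.trans hs.symm) with h | h
  · exact h
  · exfalso
    have := gauss_sign_one p n hp ζ hprim (-1) (Or.inr rfl) (4 * n * (n * (3 * n + 1))) (by
      rw [hQ, ← hG, h]; simp)
    norm_num at this

lemma gauss_shift (p n : ℕ) [Fact p.Prime] (hp : p = 4 * n + 1) (m : ℕ) :
    ∑ j ∈ Finset.range p, (legendreSym p (j : ℤ) : ℂ) * Complex.exp (2 * Real.pi * Complex.I / p) ^ (j * m) =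
      (legendreSym p (m : ℤ) : ℂ) * (Real.sqrt p : ℂ) := by
  have h2 : ringChar (ZMod p) ≠ 2 := by rw [ZMod.ringChar_zmod_n]; omega
  have hne : chiC p ≠ 1 := by
    rw [chiC, Ne, MulChar.ringHomComp_eq_one_iff (RingHom.injective_int _)]
    exact quadraticChar_ne_one h2
  have hQ : (chiC p).IsQuadratic := (quadraticChar_isQuadratic (ZMod p)).comp (Int.castRingHom ℂ)
  have hG : ∑ j ∈ Finset.range p, (legendreSym p (j : ℤ) : ℂ) * Complex.exp (2 * Real.pi * Complex.I / p) ^ (j * m) =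
      gaussSum (chiC p) ((ZMod.stdAddChar (N := p)).mulShift (m : ZMod p)) := by
    rw [gaussSum, sum_zmod_range]
    refine Finset.sum_congr rfl fun j _ => ?_
    rw [chiC_natCast, AddChar.mulShift_apply, ← std_natCast, mul_comm j, Nat.cast_mul]
  rw [hG, ← gauss_value p n hp, ← chiC_natCast]
  by_cases hm : IsUnit (m : ZMod p)
  · obtain ⟨u, hu⟩ := hm
    rw [← hu, gaussSum_mulShift_eq, hQ.inv]
  · have h0 : (m : ZMod p) = 0 := by simpa [isUnit_iff_ne_zero] using hm
    rw [h0, AddChar.mulShift_zero, gaussSum_one_right hne, MulChar.map_zero, zero_mul]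

lemma leg_reflect (p n : ℕ) [Fact p.Prime] (hp : p = 4 * n + 1) (j : ℕ) (hj : j ≤ p) :
    legendreSym p ((p - j : ℕ) : ℤ) = legendreSym p (j : ℤ) := by
  have h : chiC p ((p - j : ℕ) : ZMod p) = chiC p (j : ZMod p) := by
    rw [Nat.cast_sub hj, ZMod.natCast_self, zero_sub, ← neg_one_mul, map_mul, chiC_neg_one p n hp, one_mul]
  rw [chiC_natCast, chiC_natCast] at h
  exact_mod_cast h

lemma sum_leg (p n : ℕ) [Fact p.Prime] (hp : p = 4 * n + 1) :
    ∑ j ∈ Finset.range p, (legendreSym p (j : ℤ) : ℝ) = 0 := by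
  have := gauss_shift p n hp 0
  simp [-Int.cast_sum] at this
  exact_mod_cast this

lemma sum_mul_leg (p n : ℕ) [Fact p.Prime] (hp : p = 4 * n + 1) :
    ∑ j ∈ Finset.range p, (j : ℝ) * (legendreSym p (j : ℤ) : ℝ) = 0 := by
  have hpp : p.Prime := Fact.out
  have h0 : legendreSym p ((0 : ℕ) : ℤ) = 0 := by simp
  have key : ∀ f : ℕ → ℝ, f 0 = 0 → f p = 0 → ∑ j ∈ Finset.range p, f j = ∑ j ∈ Finset.range p, f (p - j) := by
    intro f h0 h1
    have e := Finset.sum_range_reflect f (p + 1)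
    rw [Finset.sum_range_succ, Finset.sum_range_succ, h1] at e
    simp [h0] at e
    exact e.symm
  have hpl : legendreSym p ((p : ℕ) : ℤ) = 0 := by
    rw [legendreSym.eq_zero_iff]; simp
  have h := key (fun j => (j : ℝ) * (legendreSym p (j : ℤ) : ℝ)) (by simp) (by simp only [hpl]; simp)
  have h3 : ∑ j ∈ Finset.range p, ((p - j : ℕ) : ℝ) * (legendreSym p ((p - j : ℕ) : ℤ) : ℝ) =
      p * ∑ j ∈ Finset.range p, (legendreSym p (j : ℤ) : ℝ) - ∑ j ∈ Finset.range p, (j : ℝ) * (legendreSym p (j : ℤ) : ℝ) := by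
    rw [Finset.mul_sum, ← Finset.sum_sub_distrib]
    refine Finset.sum_congr rfl fun j hj => ?_
    have hj := (Finset.mem_range.1 hj).le
    rw [leg_reflect p n hp j hj, Nat.cast_sub hj]
    ring
  rw [h3, sum_leg p n hp] at h
  linarith

lemma sin_expand (p n : ℕ) [Fact p.Prime] (hp : p = 4 * n + 1) (α : ℝ) (m : ℕ) :
    ∑ j ∈ Finset.range p, (legendreSym p (j : ℤ) : ℝ) * Real.sin (2 * Real.pi * m * (α - j / p)) =
      Real.sin (2 * Real.pi * m * α) * (legendreSym p (m : ℤ) : ℝ) * Real.sqrt p := by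
  have h := gauss_shift p n hp m
  have hc : ∀ j : ℕ, Complex.exp (2 * Real.pi * Complex.I / p) ^ (j * m) =
      Complex.exp (((2 * Real.pi * m * (j / p) : ℝ) : ℂ) * Complex.I) := by
    intro j
    rw [← Complex.exp_nat_mul]
    congr 1
    push_cast
    ring
  simp only [hc] at h
  have hre := congrArg Complex.re h
  have him := congrArg Complex.im h
  simp only [Complex.re_sum, Complex.im_sum, ← Complex.ofReal_intCast, Complex.re_ofReal_mul,
    Complex.im_ofReal_mul, Complex.exp_ofReal_mul_I_re, Complex.exp_ofReal_mul_I_im,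
    Complex.ofReal_re, Complex.ofReal_im, mul_zero] at hre him
  have : ∀ j ∈ Finset.range p, (legendreSym p (j : ℤ) : ℝ) * Real.sin (2 * Real.pi * m * (α - j / p)) =
      Real.sin (2 * Real.pi * m * α) * ((legendreSym p (j : ℤ) : ℝ) * Real.cos (2 * Real.pi * m * (j / p)))
      - Real.cos (2 * Real.pi * m * α) * ((legendreSym p (j : ℤ) : ℝ) * Real.sin (2 * Real.pi * m * (j / p))) := by
    intro j _
    rw [mul_sub, Real.sin_sub]
    ring
  rw [Finset.sum_congr rfl this, Finset.sum_sub_distrib, ← Finset.mul_sum, ← Finset.mul_sum, hre, him]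
  ring

/-- For a prime `p ≡ 1 (mod 4)` and `0 < α < 1` with `αp ∉ ℤ`, the partial
sums `∑_{m=1}^{M} (sin(2πmα)/m) (m/p)` converge to `(π/√p) · L(α,p)`, where
`L(α,p) = ∑_{n=1}^{⌊αp⌋} (n/p)`. -/
theorem stmt_5 (p : ℕ) [Fact p.Prime] (hp4 : p % 4 = 1) (α : ℝ) (h0 : 0 < α)
    (h1 : α < 1) (hint : ∀ k : ℤ, α * (p : ℝ) ≠ (k : ℝ)) :
    Tendsto (fun M : ℕ =>
        ∑ m ∈ Finset.Icc 1 M,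
          Real.sin (2 * Real.pi * (m : ℝ) * α) / (m : ℝ) *
            (legendreSym p (m : ℤ) : ℝ))
      atTop
      (nhds (Real.pi / Real.sqrt p *
        ((∑ n ∈ Finset.Icc 1 ⌊α * (p : ℝ)⌋₊, legendreSym p (n : ℤ) : ℤ) : ℝ))) := by
  obtain ⟨n, hp⟩ : ∃ n, p = 4 * n + 1 := ⟨p / 4, by omega⟩
  have hpp : p.Prime := Fact.out
  have hp0 : (0 : ℝ) < p := by exact_mod_cast hpp.pos
  have hsq : 0 < Real.sqrt p := Real.sqrt_pos.2 hp0
  have hsaw : ∀ j ∈ Finset.range p, Tendsto (fun M : ℕ => ∑ m ∈ Finset.range M,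
      Real.sin (2 * Real.pi * (m : ℝ) * (α - j / p)) / (m : ℝ)) atTop
      (nhds (Real.pi * (1 / 2 - α + j / p) - if j ≤ ⌊α * (p : ℝ)⌋₊ then 0 else Real.pi)) := by
    intro j hj
    rw [Finset.mem_range] at hj
    have hjp : (j : ℝ) < p := by exact_mod_cast hj
    have hj1 : (j : ℝ) / p < 1 := by rwa [div_lt_one hp0]
    have hj0 : 0 ≤ (j : ℝ) / p := by positivity
    split_ifs with hle
    · rw [Nat.le_floor_iff (by positivity)] at hle
      have hlt : (j : ℝ) < α * p := lt_of_le_of_ne hle fun h => hint j (by simpa using h.symm)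
      have hlt2 : (j : ℝ) / p < α := by rwa [div_lt_iff₀ hp0]
      convert saw (α - j / p) (by linarith) (by linarith) using 2
      ring
    · rw [Nat.le_floor_iff (by positivity), not_le] at hle
      have hlt2 : α < (j : ℝ) / p := by rwa [lt_div_iff₀ hp0]
      convert saw (α - j / p + 1) (by linarith) (by linarith) using 2
      · refine Finset.sum_congr rfl fun m _ => ?_
        rw [show 2 * Real.pi * (m : ℝ) * (α - j / p + 1) = 2 * Real.pi * m * (α - j / p) + m * (2 * Real.pi) by ring,
          Real.sin_add_nat_mul_two_pi]
      · ring
  have hsum := tendsto_finsetSum (Finset.range p)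
    (fun j hj => (hsaw j hj).const_mul (legendreSym p (j : ℤ) : ℝ))
  have hdiv := hsum.div_const (Real.sqrt p)
  rw [← tendsto_add_atTop_iff_nat 1] at hdiv
  refine (hdiv.congr fun M => ?_).trans (le_of_eq ?_)
  · simp only [Finset.mul_sum]
    rw [Finset.sum_comm]
    have hI : Finset.range (M + 1) = insert 0 (Finset.Icc 1 M) := by
      ext k; simp only [Finset.mem_range, Finset.mem_insert, Finset.mem_Icc]; omega
    rw [hI, Finset.sum_insert (by simp)]
    simp only [Nat.cast_zero, div_zero, mul_zero, Finset.sum_const_zero, zero_add]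
    rw [Finset.sum_div]
    refine Finset.sum_congr rfl fun m _ => ?_
    have h := sin_expand p n hp α m
    simp only [← mul_div_assoc]
    rw [← Finset.sum_div, h]
    field_simp
  · congr 1
    have hF : ⌊α * (p : ℝ)⌋₊ < p := by
      rw [Nat.floor_lt (by positivity)]
      nlinarith
    have e1 : ∀ j ∈ Finset.range p, (legendreSym p (j : ℤ) : ℝ) * (Real.pi * (1 / 2 - α + j / p) -
        if j ≤ ⌊α * (p : ℝ)⌋₊ then 0 else Real.pi) =
        (Real.pi * (1 / 2 - α) - Real.pi) * (legendreSym p (j : ℤ) : ℝ) +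
        Real.pi / p * ((j : ℝ) * (legendreSym p (j : ℤ) : ℝ)) +
        Real.pi * (if j ≤ ⌊α * (p : ℝ)⌋₊ then (legendreSym p (j : ℤ) : ℝ) else 0) := by
      intro j _
      split_ifs <;> ring
    rw [Finset.sum_congr rfl e1, Finset.sum_add_distrib, Finset.sum_add_distrib, ← Finset.mul_sum,
      ← Finset.mul_sum, ← Finset.mul_sum, sum_leg p n hp, sum_mul_leg p n hp, ← Finset.sum_filter]
    have hI : (Finset.range p).filter (fun j => j ≤ ⌊α * (p : ℝ)⌋₊) =
        insert 0 (Finset.Icc 1 ⌊α * (p : ℝ)⌋₊) := by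
      ext k; simp only [Finset.mem_range, Finset.mem_insert, Finset.mem_Icc, Finset.mem_filter]; omega
    rw [hI, Finset.sum_insert (by simp)]
    push_cast
    simp
    ring
end

section
/- For every nonzero integer a there exist a positive integer q with q ≤ 4|a| and a Dirichlet character χ modulo q such that for every odd positive integer n the Jacobi symbol (a/n) equals χ(n), and moreover χ is nonprincipal if and only if a is not a perfect square. -/
theorem aux_one (m : ℤ) (hm : m ≠ 0) (n : ℕ) (hn : Odd n) (h : n ≡ 1 [MOD 4 * m.natAbs]) :
    jacobiSym m n = 1 := by
  rw [jacobiSym.mod_right m hn, h]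
  have : 0 < m.natAbs := Int.natAbs_pos.mpr hm
  rw [Nat.mod_eq_of_lt (by omega), jacobiSym.one_right]

theorem aux_prime (p j : ℕ) (hp : p.Prime) (m : ℤ) (hm : m ≠ 0) (hpm : ¬ (p : ℤ) ∣ m) :
    ∃ n : ℕ, Odd n ∧ jacobiSym ((p : ℤ) ^ (2 * j + 1) * m) n = -1 := by
  have key : ∀ n : ℕ, Odd n → n ≡ 1 [MOD 4 * m.natAbs] → jacobiSym (p : ℤ) n = -1 →
      jacobiSym ((p : ℤ) ^ (2 * j + 1) * m) n = -1 := by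
    intro n hn h1 h2
    rw [jacobiSym.mul_left, jacobiSym.pow_left, h2, aux_one m hm n hn h1]
    simp [pow_succ, pow_mul]
  rcases hp.eq_two_or_odd' with rfl | hodd
  · refine ⟨1 + 4 * m.natAbs, ⟨2 * m.natAbs, by ring⟩, ?_⟩
    have ho : Odd (1 + 4 * m.natAbs) := ⟨2 * m.natAbs, by ring⟩
    refine key _ ho (by simp [Nat.ModEq]) ?_
    have := jacobiSym.at_two ho
    push_cast at this ⊢
    rw [this]
    have h2 : (1 + 4 * m.natAbs) % 8 = 5 := by omega
    have h3 : ((1 + 4 * m.natAbs : ℕ) : ZMod 8) = 5 := by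
      rw [← ZMod.natCast_mod, h2]; rfl
    push_cast at h3
    rw [h3]
    decide
  · have : Fact p.Prime := ⟨hp⟩
    obtain ⟨u, hu⟩ := quadraticChar_exists_neg_one (F := ZMod p)
      (by rw [ZMod.ringChar_zmod_n]; rintro rfl; exact absurd hodd (by decide))
    have hco : Nat.Coprime (4 * m.natAbs) p := by
      apply Nat.Coprime.symm
      rw [Nat.Prime.coprime_iff_not_dvd hp, Nat.Prime.dvd_mul hp]
      rintro (h | h)
      · have : p ∣ 2 := hp.dvd_of_dvd_pow (n := 2) (by simpa using h)
        have := (Nat.prime_dvd_prime_iff_eq hp Nat.prime_two).1 this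
        subst this
        exact absurd hodd (by decide)
      · exact hpm (Int.natCast_dvd.mpr h)
    obtain ⟨n, h1, h2⟩ := Nat.chineseRemainder hco 1 u.val
    have h4 : n % 4 = 1 := (h1.of_mul_right _)
    have hn : Odd n := by rw [Nat.odd_iff]; omega
    refine ⟨n, hn, key n hn h1 ?_⟩
    rw [jacobiSym.quadratic_reciprocity_one_mod_four' hodd h4, ← jacobiSym.legendreSym.to_jacobiSym,
      legendreSym]
    have : ((n : ℤ) : ZMod p) = u := by
      rw [Int.cast_natCast, (ZMod.natCast_eq_natCast_iff _ _ _).2 h2, ZMod.natCast_zmod_val]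
    rw [this, hu]

theorem aux_nonsq (a : ℤ) (ha : a ≠ 0) (hs : ¬ IsSquare a) :
    ∃ n : ℕ, Odd n ∧ jacobiSym a n = -1 := by
  obtain ⟨s, b, hsb, hsf⟩ := Nat.sq_mul_squarefree a.natAbs
  have hb0 : b ≠ 0 := by rintro rfl; simp at hsb; omega
  by_cases h1 : s = 1
  · subst h1
    have : a = -((b : ℤ) ^ 2) := by
      rcases Int.natAbs_eq a with h | h
      · exact absurd ⟨(b : ℤ), by rw [h, ← hsb]; push_cast; ring⟩ hs
      · rw [h, ← hsb]; push_cast; ring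
    have hbp : 0 < b ^ 2 := by positivity
    have ho : Odd (4 * b ^ 2 - 1) := by rw [Nat.odd_iff]; omega
    refine ⟨4 * b ^ 2 - 1, ho, ?_⟩
    rw [this, jacobiSym.neg _ ho, jacobiSym.sq_one']
    · rw [ZMod.χ₄_nat_three_mod_four (by omega)]; rfl
    · rw [Int.gcd_natCast_natCast]
      have h5 : Nat.gcd b (4 * b ^ 2 - 1) ∣ 1 := by
        have e : 4 * b ^ 2 - (4 * b ^ 2 - 1) = 1 := by omega
        have h6 := Nat.dvd_sub ((Nat.gcd_dvd_left _ _).trans (⟨4 * b, by ring⟩ : b ∣ 4 * b ^ 2)) (Nat.gcd_dvd_right b (4 * b ^ 2 - 1))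
        rwa [e] at h6
      exact Nat.dvd_one.1 h5
  · obtain ⟨p, hp, t, rfl⟩ := Nat.exists_prime_and_dvd h1
    obtain ⟨j, c, hc, rfl⟩ := Nat.exists_eq_pow_mul_and_not_dvd hb0 p hp.ne_one
    have hpt : ¬ p ∣ t := by
      rintro ⟨r, rfl⟩
      exact hp.not_isUnit (hsf p ⟨r, by ring⟩)
    have hpm : ¬ p ∣ c ^ 2 * t := by
      rw [hp.dvd_mul]
      rintro (h | h)
      · exact hc (hp.dvd_of_dvd_pow h)
      · exact hpt h
    have hm0 : c ^ 2 * t ≠ 0 := fun h => hpm (h ▸ dvd_zero p)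
    rcases Int.natAbs_eq a with h | h
    · have := aux_prime p j hp ((c ^ 2 * t : ℕ) : ℤ) (by exact_mod_cast hm0) (by exact_mod_cast hpm)
      convert this using 4
      rw [h, ← hsb]; push_cast; ring
    · have := aux_prime p j hp (-((c ^ 2 * t : ℕ) : ℤ)) (by rw [neg_ne_zero]; exact_mod_cast hm0)
        (by rw [dvd_neg]; exact_mod_cast hpm)
      convert this using 4
      rw [h, ← hsb]; push_cast; ring

/-- the Jacobi symbol extended by zero to even numbers -/
def auxG (a : ℤ) (n : ℕ) : ℤ := if Odd n then jacobiSym a n else 0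

theorem auxG_mod (a : ℤ) (n : ℕ) : auxG a (n % (4 * a.natAbs)) = auxG a n := by
  have h : Odd (n % (4 * a.natAbs)) ↔ Odd n := by
    rw [Nat.odd_iff, Nat.odd_iff, Nat.mod_mod_of_dvd n ⟨2 * a.natAbs, by ring⟩]
  unfold auxG
  simp only [h]
  split_ifs with ho
  · exact (jacobiSym.mod_right a ho).symm
  · rfl

theorem auxG_mul (a : ℤ) (m n : ℕ) : auxG a (m * n) = auxG a m * auxG a n := by
  unfold auxG
  by_cases hm : Odd m
  · by_cases hn : Odd n
    · rw [if_pos (hm.mul hn), if_pos hm, if_pos hn, jacobiSym.mul_right' a hm.pos.ne' hn.pos.ne']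
    · simp [Nat.odd_mul, hn]
  · simp [Nat.odd_mul, hm]

theorem auxG_zero (a : ℤ) (n : ℕ) (h : ¬ n.Coprime (4 * a.natAbs)) : auxG a n = 0 := by
  unfold auxG
  split_ifs with ho
  · rw [jacobiSym.eq_zero_iff]
    refine ⟨ho.pos.ne', fun hg => h ?_⟩
    have h2 : n.Coprime (2 ^ 2) := ho.coprime_two_right.pow_right 2
    refine Nat.Coprime.mul_right h2 ?_
    exact (Nat.coprime_comm.1 (by simpa [Int.gcd] using hg))
  · rfl

/-- For every nonzero integer `a` there are a modulus `q ≤ 4|a|` and a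
Dirichlet character `χ` mod `q` such that the Jacobi symbol `(a/n)` equals
`χ(n)` for all odd positive integers `n`, and `χ` is nonprincipal iff `a`
is not a perfect square. -/
theorem stmt_8 (a : ℤ) (ha : a ≠ 0) :
    ∃ q : ℕ, 0 < q ∧ (q : ℤ) ≤ 4 * |a| ∧
      ∃ χ : DirichletCharacter ℤ q,
        (∀ n : ℕ, Odd n → 0 < n → jacobiSym a n = χ (n : ZMod q)) ∧
        (χ ≠ 1 ↔ ¬IsSquare a) := by
  have hpos : 0 < a.natAbs := Int.natAbs_pos.mpr ha
  have : NeZero (4 * a.natAbs) := ⟨by omega⟩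
  let χ : DirichletCharacter ℤ (4 * a.natAbs) :=
    { toFun := fun x => auxG a x.val
      map_one' := by
        rw [ZMod.val_one'' (by omega)]; simp [auxG]
      map_mul' := fun x y => by
        rw [ZMod.val_mul, auxG_mod, auxG_mul]
      map_nonunit' := fun x hx => by
        apply auxG_zero
        intro h
        apply hx
        rw [← ZMod.natCast_zmod_val x]
        exact (ZMod.isUnit_iff_coprime _ _).2 h }
  have hχ : ∀ n : ℕ, Odd n → jacobiSym a n = χ (n : ZMod (4 * a.natAbs)) := by
    intro n hn
    change _ = auxG a (ZMod.val (n : ZMod (4 * a.natAbs)))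
    rw [ZMod.val_natCast, auxG_mod, auxG, if_pos hn]
  refine ⟨4 * a.natAbs, by omega, by push_cast; exact le_rfl, χ,
    fun n hn _ => hχ n hn, ?_⟩
  constructor
  · rintro h ⟨c, rfl⟩
    apply h
    ext x
    have hx := (ZMod.isUnit_iff_coprime (x : ZMod _).val (4 * (c * c).natAbs)).1
      (by rw [ZMod.natCast_zmod_val]; exact x.isUnit)
    rw [MulChar.one_apply_coe, ← ZMod.natCast_zmod_val (x : ZMod (4 * (c * c).natAbs))]
    have ho : Odd (x : ZMod (4 * (c * c).natAbs)).val := by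
      rw [← Nat.coprime_two_right]
      exact hx.coprime_dvd_right ⟨2 * (c * c).natAbs, by ring⟩
    rw [← hχ _ ho, jacobiSym.mul_left, ← pow_two, jacobiSym.sq_one]
    have h3 : Nat.Coprime (x : ZMod (4 * (c * c).natAbs)).val c.natAbs :=
      hx.coprime_dvd_right ⟨4 * c.natAbs, by rw [Int.natAbs_mul]; ring⟩
    exact h3.symm
  · intro hs h
    obtain ⟨n, hn, hj⟩ := aux_nonsq a ha hs
    rw [hχ n hn, h] at hj
    by_cases hu : IsUnit (n : ZMod (4 * a.natAbs))
    · rw [MulChar.one_apply hu] at hj; omega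
    · rw [MulChar.map_nonunit _ hu] at hj; omega
end
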